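/- arXiv:1810.00915 — 3 statements merged into one kernel-verified Lean document; each statement's English description precedes it below -/
import Mathlib

section
/- Let n, k, s be positive integers with n ≥ 2k² and k ≥ 3s. Then any family F of k-element subsets of [n] with matching number ν(F) ≤ s satisfies δ_1(F) ≤ C(n-1, k-1) - C(n-s-1, k-1). -/
/-!
A family with a vertex cover of size `s` has small degree at every vertex outside the cover. A
`k`-uniform family `F` without `s + 1` disjoint members and without such a cover is so much smaller
than the family of all `k`-sets meeting a fixed `s`-set that its average degree is already below
the bound. To see this, apply `i < j` compressions, which preserve the size of `F` and create no
larger matchings, for as long as no `s`-cover appears.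

If a further compression would create an `s`-cover, then `F` is covered minimally by an
`(s + 1)`-set `X`; otherwise `F` is shifted, and `X` is taken to be the first `s + 1` vertices. In
both cases assign to each `(k - 1)`-set `B` outside `X` its link `{x ∈ X | B ∪ {x} ∈ F}`. Disjoint
sets `B` cannot have a system of `s + 1` distinct representatives, and averaging over all
collections of disjoint `B` bounds the sum of the link sizes. Minimality gives a `B` whose link is
all of `X`; away from it not even `s` representatives are possible, which improves the bound by a
fixed proportion. The members of `F` disjoint from `X` are controlled by Frankl's shadow inequality
`#H ≤ s * #(∂ H)`.
-/

open Finset Function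
open scoped FinsetFamily

namespace ErdosMatching

variable {α β ι : Type*}

section Averaging

lemma exists_pairwise_disjoint_card_eq [Fintype α] {m k : ℕ} (h : m * k ≤ Fintype.card α) :
    ∃ B : Fin m → Finset α, (∀ j, #(B j) = k) ∧ Pairwise (Disjoint on B) := by
  obtain ⟨e⟩ : Nonempty (Fin m × Fin k ↪ α) :=
    Embedding.nonempty_of_card_le (by simpa using h)
  refine ⟨fun j ↦ univ.map ((Embedding.sectR j (Fin k)).trans e), by simp, fun i j hij ↦ ?_⟩
  simp [onFun, disjoint_left, hij.symm]

lemma exists_perm_map_eq [Finite α] {A B : Finset α} (h : #A = #B) :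
    ∃ σ : Equiv.Perm α, A.map σ.toEmbedding = B := by
  classical
  let e : A ≃ B := equivOfCardEq h
  refine ⟨e.extendSubtype, eq_of_subset_of_card_le (fun y hy ↦ ?_) (by rw [card_map, h])⟩
  obtain ⟨x, hx, rfl⟩ := mem_map.1 hy
  exact e.extendSubtype_mem x hx

lemma choose_nsmul_sum_perm_map {M : Type*} [AddCommMonoid M] [Fintype α] [DecidableEq α]
    (φ : Finset α → M) (B : Finset α) :
    (Fintype.card α).choose #B • ∑ σ : Equiv.Perm α, φ (B.map σ.toEmbedding) =
      Fintype.card (Equiv.Perm α) • ∑ A ∈ powersetCard #B univ, φ A := by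
  have sum_eq_of_card_eq (A) (hA : A ∈ powersetCard #B univ) :
      ∑ σ : Equiv.Perm α, φ (A.map σ.toEmbedding) =
        ∑ σ : Equiv.Perm α, φ (B.map σ.toEmbedding) := by
    obtain ⟨τ, rfl⟩ := exists_perm_map_eq (mem_powersetCard.1 hA).2.symm
    rw [← Equiv.sum_comp (Equiv.mulRight τ) fun σ ↦ φ (B.map σ.toEmbedding)]
    simp only [map_map]
    rfl
  have sum_map_eq (σ : Equiv.Perm α) :
      ∑ A ∈ powersetCard #B univ, φ (A.map σ.toEmbedding) = ∑ A ∈ powersetCard #B univ, φ A := by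
    conv_rhs => rw [← map_univ_equiv σ, powersetCard_map, sum_map]
    rfl
  rw [← card_univ, ← card_powersetCard, ← sum_const, ← sum_congr rfl sum_eq_of_card_eq, sum_comm,
    sum_congr rfl fun σ _ ↦ sum_map_eq σ, sum_const, card_univ]

lemma mul_sum_powersetCard_univ_le [Fintype α] {m k W : ℕ} (φ : Finset α → ℕ)
    (hm : m * k ≤ Fintype.card α)
    (hφ : ∀ B : Fin m → Finset α, (∀ j, #(B j) = k) → Pairwise (Disjoint on B) →
      ∑ j, φ (B j) ≤ W) :
    m * ∑ A ∈ powersetCard k univ, φ A ≤ (Fintype.card α).choose k * W := by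
  classical
  obtain ⟨B, hBk, hBd⟩ := exists_pairwise_disjoint_card_eq hm
  refine Nat.le_of_mul_le_mul_left ?_ (Fintype.card_pos (α := Equiv.Perm α))
  calc Fintype.card (Equiv.Perm α) * (m * ∑ A ∈ powersetCard k univ, φ A)
      = ∑ j, (Fintype.card α).choose k * ∑ σ : Equiv.Perm α, φ ((B j).map σ.toEmbedding) := by
        have (j : Fin m) := hBk j ▸ choose_nsmul_sum_perm_map φ (B j)
        simp only [smul_eq_mul] at this
        simp [this, mul_left_comm]
    _ = (Fintype.card α).choose k * ∑ σ : Equiv.Perm α, ∑ j, φ ((B j).map σ.toEmbedding) := by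
        rw [← mul_sum, sum_comm]
    _ ≤ (Fintype.card α).choose k * ∑ _σ : Equiv.Perm α, W := by
        gcongr with σ
        exact hφ _ (by simpa using hBk) fun i j hij ↦ (disjoint_map _).2 (hBd hij)
    _ = Fintype.card (Equiv.Perm α) * ((Fintype.card α).choose k * W) := by
        simp [mul_left_comm]

lemma mul_sum_powersetCard_le {Y : Finset α} {m k W : ℕ} (φ : Finset α → ℕ)
    (hm : m * k ≤ #Y)
    (hφ : ∀ B : Fin m → Finset α, (∀ j, B j ∈ powersetCard k Y) → Pairwise (Disjoint on B) →
      ∑ j, φ (B j) ≤ W) :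
    m * ∑ A ∈ powersetCard k Y, φ A ≤ (#Y).choose k * W := by
  have key := mul_sum_powersetCard_univ_le (α := Y) (W := W)
    (fun A ↦ φ (A.map (Embedding.subtype _))) (by simpa using hm) fun B hBk hBd ↦
      hφ _ (fun j ↦ mem_powersetCard.2 ⟨by simp +contextual [subset_iff], by simp [hBk]⟩)
        fun i j hij ↦ (disjoint_map _).2 (hBd hij)
  have map_univ : (univ : Finset Y).map (Embedding.subtype _) = Y := by ext; simp
  conv_lhs => rw [← map_univ, powersetCard_map, sum_map]
  simpa using key

end Averaging

section PartialTransversals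

/-- The sets `D i` have a partial transversal of length `q`: `q` distinct indices together with
distinct representatives of the corresponding sets. -/
def HasPartialTransversal (D : ι → Finset α) (q : ℕ) : Prop :=
  ∃ (p : Fin q ↪ ι) (x : Fin q ↪ α), ∀ j, x j ∈ D (p j)

lemma HasPartialTransversal.option_elim {D : ι → Finset α} {D₀ : Finset α} {q : ℕ}
    (h : HasPartialTransversal D q) (h₀ : q < #D₀) :
    HasPartialTransversal (fun o : Option ι ↦ o.elim D₀ D) (q + 1) := by
  classical
  obtain ⟨p, x, hx⟩ := h
  obtain ⟨y, hy, hyx⟩ : ∃ y ∈ D₀, y ∉ univ.map x :=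
    exists_mem_notMem_of_card_lt_card (by simpa using h₀)
  refine ⟨⟨Fin.cons none (some ∘ p), Fin.cons_injective_iff.2 ⟨by simp, ?_⟩⟩,
    ⟨Fin.cons y x, Fin.cons_injective_iff.2 ⟨by simpa using hyx, x.injective⟩⟩, ?_⟩
  · exact (Option.some_injective ι).comp p.injective
  · exact Fin.forall_fin_succ.2 ⟨by simpa using hy, by simpa using hx⟩

lemma exists_embedding_mem_of_lt_card {q : ℕ} {S : Fin q → Finset β}
    (h : ∀ j : Fin q, (j : ℕ) < #(S j)) :
    ∃ x : Fin q ↪ β, ∀ j, x j ∈ S j := by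
  classical
  obtain ⟨x, hx, hxS⟩ := (all_card_le_biUnion_card_iff_exists_injective S).1 fun J ↦ by
    obtain rfl | hJ := J.eq_empty_or_nonempty
    · simp
    calc #J ≤ #(Iic (J.max' hJ)) := card_le_card fun j hj ↦ mem_Iic.2 (J.le_max' j hj)
      _ = J.max' hJ + 1 := Fin.card_Iic _
      _ ≤ #(S (J.max' hJ)) := h _
      _ ≤ #(J.biUnion S) := card_le_card (subset_biUnion_of_mem S (J.max'_mem hJ))
  exact ⟨⟨x, hx⟩, hxS⟩

lemma hasPartialTransversal_of_le_card_filter [Fintype ι] {D : ι → Finset α} {q : ℕ}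
    (h : ∀ j < q, q ≤ #{i | j < #(D i)} + j) : HasPartialTransversal D q := by
  obtain ⟨p, hp⟩ := exists_embedding_mem_of_lt_card
    (S := fun j : Fin q ↦ ({i | (j.rev : ℕ) < #(D i)} : Finset ι)) fun j ↦ by
      have := h j.rev j.rev.isLt
      have := Fin.val_rev j
      omega
  obtain ⟨x, hx⟩ := exists_embedding_mem_of_lt_card (S := fun j : Fin q ↦ D (p j.rev)) fun j ↦ by
    simpa using hp j.rev
  exact ⟨Fin.revPerm.toEmbedding.trans p, x, by simpa using hx⟩

lemma sum_ite_card_lt_le [Fintype ι] {D : ι → Finset α} {q : ℕ}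
    (h : ¬ HasPartialTransversal D q) :
    ∑ i, (if #(D i) < q then #(D i) else Fintype.card ι) ≤ (q - 1) * Fintype.card ι := by
  obtain hq | hq := lt_or_ge (Fintype.card ι) q
  · rw [mul_comm, ← smul_eq_mul, ← card_univ]
    exact sum_le_card_nsmul _ _ _ fun i _ ↦ by rw [card_univ]; split_ifs <;> omega
  obtain ⟨j, hjq, hj⟩ : ∃ j < q, #{i | j < #(D i)} + j < q := by
    by_contra! hcon
    exact h (hasPartialTransversal_of_le_card_filter hcon)
  calc ∑ i, (if #(D i) < q then #(D i) else Fintype.card ι)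
      ≤ ∑ i, ((if j < #(D i) then Fintype.card ι else 0) + j) := by
        gcongr with i
        split_ifs <;> omega
    _ = (#{i | j < #(D i)} + j) * Fintype.card ι := by
        rw [sum_add_distrib, ← sum_filter, sum_const, sum_const, card_univ]
        simp only [smul_eq_mul]
        ring
    _ ≤ (q - 1) * Fintype.card ι := Nat.mul_le_mul_right _ (by omega)

lemma sum_powersetCard_ite_card_lt_le {Y : Finset α} {m k q : ℕ} (hm : 0 < m) (hY : m * k ≤ #Y)
    {D : Finset α → Finset β}
    (h : ∀ B : Fin m → Finset α, (∀ j, B j ∈ powersetCard k Y) → Pairwise (Disjoint on B) →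
      ¬ HasPartialTransversal (fun j ↦ D (B j)) q) :
    ∑ B ∈ powersetCard k Y, (if #(D B) < q then #(D B) else m) ≤ (q - 1) * (#Y).choose k := by
  refine Nat.le_of_mul_le_mul_left ?_ hm
  calc m * ∑ B ∈ powersetCard k Y, (if #(D B) < q then #(D B) else m)
      ≤ (#Y).choose k * ((q - 1) * m) :=
        mul_sum_powersetCard_le _ hY fun B hB hBd ↦ by
          simpa only [Fintype.card_fin] using sum_ite_card_lt_le (h B hB hBd)
    _ = m * ((q - 1) * (#Y).choose k) := by ring

end PartialTransversals

section Matchings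

/-- `ν(F) < m`: the family `F` has no `m` pairwise disjoint members. The matchings are indexed
families, so a family containing `∅` is never matching-free. -/
def MatchingFree (m : ℕ) (F : Finset (Finset α)) : Prop :=
  ∀ f : Fin m → Finset α, (∀ i, f i ∈ F) → ¬ Pairwise (Disjoint on f)

lemma MatchingFree.mono {m : ℕ} {F G : Finset (Finset α)} (hG : MatchingFree m G) (h : F ⊆ G) :
    MatchingFree m F :=
  fun f hf ↦ hG f fun i ↦ h (hf i)

lemma MatchingFree.eq_empty {m : ℕ} {F : Finset (Finset α)} (hF : MatchingFree m F)
    (h : ∀ A ∈ F, A = ∅) : F = ∅ := by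
  refine eq_empty_of_forall_notMem fun A hA ↦ hF (fun _ ↦ A) (fun _ ↦ hA) fun _ _ _ ↦ ?_
  simp [onFun, h A hA]

lemma matchingFree_of_forall_card_le {m : ℕ} {F : Finset (Finset α)} (hF : ∅ ∉ F)
    (h : ∀ M ⊆ F, (M : Set (Finset α)).PairwiseDisjoint id → #M ≤ m) : MatchingFree (m + 1) F := by
  intro f hfF hd
  have hf : Injective f := fun i j hij ↦ by
    by_contra hne
    have hi : f i = ∅ := disjoint_self_iff_empty _ |>.1 (by simpa [onFun, hij] using hd hne)
    exact hF (hi ▸ hfF i)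
  have hM := h (univ.map ⟨f, hf⟩) (by simpa [subset_iff] using hfF)
    (by simpa [Set.PairwiseDisjoint] using Pairwise.range_pairwise (r := Disjoint on id) hd)
  simp at hM

/-- `T` is a vertex cover (transversal) of the family `F`. -/
def Covers (T : Finset α) (F : Finset (Finset α)) : Prop :=
  ∀ A ∈ F, ¬ Disjoint A T

variable [DecidableEq α]

/-- The link of `B` in `F`, restricted to `X`: the vertices of `X` completing `B` to a member
of `F`. -/
def extensions (F : Finset (Finset α)) (X B : Finset α) : Finset α :=
  {x ∈ X | insert x B ∈ F}

@[simp]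
lemma mem_extensions {F : Finset (Finset α)} {X B : Finset α} {x : α} :
    x ∈ extensions F X B ↔ x ∈ X ∧ insert x B ∈ F :=
  mem_filter

lemma extensions_subset (F : Finset (Finset α)) (X B : Finset α) : extensions F X B ⊆ X :=
  filter_subset _ _

lemma MatchingFree.not_hasPartialTransversal {F : Finset (Finset α)} {X : Finset α} {q : ℕ}
    (hF : MatchingFree q F) {B : ι → Finset α} (hX : ∀ j, Disjoint X (B j))
    (hB : Pairwise (Disjoint on B)) :
    ¬ HasPartialTransversal (fun j ↦ extensions F X (B j)) q := by
  rintro ⟨p, x, hx⟩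
  simp only [mem_extensions] at hx
  refine hF (fun j ↦ insert (x j) (B (p j))) (fun j ↦ (hx j).2) fun i j hij ↦ ?_
  have notMem (i j) : x i ∉ B (p j) := disjoint_left.1 (hX _) (hx i).1
  simp [onFun, disjoint_insert_left, disjoint_insert_right, notMem, hij.symm,
    hB (p.injective.ne hij)]

lemma MatchingFree.not_hasPartialTransversal_of_extensions_eq {F : Finset (Finset α)}
    {X Z : Finset α} {q : ℕ} (hF : MatchingFree (q + 1) F) (hqX : q < #X)
    (hXZ : Disjoint X Z) (hZ : extensions F X Z = X) {B : ι → Finset α}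
    (hX : ∀ j, Disjoint X (B j)) (hZB : ∀ j, Disjoint Z (B j)) (hB : Pairwise (Disjoint on B)) :
    ¬ HasPartialTransversal (fun j ↦ extensions F X (B j)) q := by
  intro h
  refine hF.not_hasPartialTransversal (X := X) (B := fun o : Option ι ↦ o.elim Z B)
    (Option.forall.2 ⟨hXZ, hX⟩) ?_ ?_
  · rintro (_ | i) (_ | j) hij
    · exact absurd rfl hij
    · exact hZB j
    · exact (hZB i).symm
    · exact hB fun h ↦ hij (congrArg some h)
  · convert h.option_elim (D₀ := extensions F X Z) (by rwa [hZ]) using 2 with o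
    cases o <;> rfl

end Matchings

section Shifting

variable [DecidableEq α] {F : Finset (Finset α)} {A : Finset α} {i j : α}

lemma compress_singleton (hi : i ∉ A) (hj : j ∈ A) :
    UV.compress {i} {j} A = insert i (A.erase j) := by
  rw [UV.compress_of_disjoint_of_le (by simpa) (by simpa)]
  grind

lemma insert_erase_mem_of_isCompressed (hF : UV.IsCompressed {i} {j} F) (hA : A ∈ F)
    (hj : j ∈ A) (hi : i ∉ A) : insert i (A.erase j) ∈ F := by
  rw [← compress_singleton hi hj, ← hF.eq]
  exact UV.compress_mem_compression hA

lemma map_swap_mem_of_mem_compression (hA : A ∈ 𝓒 {i} {j} F) (hi : A ∈ F → i ∉ A) :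
    A.map (Equiv.swap i j).toEmbedding ∈ F := by
  by_cases hAF : A ∈ F
  · by_cases hj : j ∈ A
    · convert UV.sup_sdiff_mem_of_mem_compression hA (by simpa) (by simpa using hi hAF) using 1
      ext x
      simp only [mem_map_equiv, Equiv.symm_swap, Equiv.swap_apply_def, sup_eq_union', mem_sdiff,
        mem_union, mem_singleton]
      grind
    · convert hAF
      ext x
      simp only [mem_map_equiv, Equiv.symm_swap, Equiv.swap_apply_def]
      grind
  · have hi' := UV.le_of_mem_compression_of_notMem hA hAF
    have hj' := UV.disjoint_of_mem_compression_of_notMem hA hAF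
    convert UV.sup_sdiff_mem_of_mem_compression_of_notMem hA hAF using 1
    ext x
    simp only [singleton_subset_iff, disjoint_singleton_left, mem_map_equiv, Equiv.symm_swap,
      Equiv.swap_apply_def, sup_eq_union', mem_sdiff, mem_union, mem_singleton] at hi' hj' ⊢
    grind

lemma MatchingFree.compression {m : ℕ} (hF : MatchingFree m F) (i j : α) :
    MatchingFree m (𝓒 {i} {j} F) := by
  intro f hf hd
  by_cases hfF : ∀ p, f p ∈ F
  · exact hF f hfF hd
  push Not at hfF
  obtain ⟨p, hp⟩ := hfF
  have hip : i ∈ f p := by simpa using UV.le_of_mem_compression_of_notMem (hf p) hp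
  refine hF (fun q ↦ (f q).map (Equiv.swap i j).toEmbedding)
    (fun q ↦ map_swap_mem_of_mem_compression (hf q) fun hq hiq ↦ ?_)
    fun q r hqr ↦ (disjoint_map _).2 (hd hqr)
  obtain rfl | hqp := eq_or_ne q p
  · exact hp hq
  · exact disjoint_left.1 (hd hqp) hiq hip

lemma disjoint_compress_singleton_iff {T : Finset α} (hi : i ∉ T) (hj : j ∉ T) (A : Finset α) :
    Disjoint (UV.compress {i} {j} A) T ↔ Disjoint A T := by
  unfold UV.compress
  split_ifs
  · simp only [disjoint_left]
    grind
  · rfl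

lemma compression_eq_image (F : Finset (Finset α)) (i j : α) :
    𝓒 {i} {j} F =
      F.image fun A ↦ if UV.compress {i} {j} A ∈ F then A else UV.compress {i} {j} A := by
  ext A
  simp only [UV.mem_compression, mem_image]
  grind

lemma covers_compression_iff {T : Finset α} (hi : i ∉ T) (hj : j ∉ T) :
    Covers T (𝓒 {i} {j} F) ↔ Covers T F := by
  simp only [Covers, compression_eq_image, forall_mem_image]
  refine forall₂_congr fun A _ ↦ ?_
  split_ifs
  · rfl
  · rw [disjoint_compress_singleton_iff hi hj]

end Shifting

section RankSum

variable [Fintype α] [LinearOrder α] {F : Finset (Finset α)} {A : Finset α} {i j : α}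

/-- The sum of the ranks of all vertices of all members of `F`, a potential function for
shifting. -/
def rankSum (F : Finset (Finset α)) : ℕ :=
  ∑ A ∈ F, ∑ a ∈ A, #{b | b < a}

lemma sum_card_lt_compress_lt (hij : i < j) (hA : UV.compress {i} {j} A ≠ A) :
    ∑ a ∈ UV.compress {i} {j} A, #{b | b < a} < ∑ a ∈ A, #{b | b < a} := by
  obtain ⟨hi, hj⟩ : i ∉ A ∧ j ∈ A := by
    by_contra h
    exact hA (if_neg (by simpa using h))
  rw [compress_singleton hi hj, sum_insert (by simp [hi]), ← add_sum_erase A _ hj]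
  gcongr 1
  refine card_lt_card ((ssubset_iff_of_subset ?_).2 ⟨i, by simpa, by simp⟩)
  exact monotone_filter_right _ fun b _ (hb : b < i) ↦ hb.trans hij

lemma rankSum_compression_lt (hij : i < j) (hF : ¬ UV.IsCompressed {i} {j} F) :
    rankSum (𝓒 {i} {j} F) < rankSum F := by
  obtain ⟨A, hA, hAF⟩ : ∃ A ∈ F, UV.compress {i} {j} A ∉ F := by
    by_contra! h
    refine hF ?_
    rw [UV.IsCompressed, compression_eq_image, image_congr fun A hA ↦ if_pos (h A hA), image_id']
  have compress_lt {B} (hB : B ∈ F) (hBF : UV.compress {i} {j} B ∉ F) :=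
    sum_card_lt_compress_lt hij (ne_of_mem_of_not_mem hB hBF).symm
  unfold rankSum
  rw [compression_eq_image]
  refine (sum_image_le_of_nonneg fun _ _ ↦ Nat.zero_le _).trans_lt (sum_lt_sum (fun B hB ↦ ?_)
    ⟨A, hA, by simpa only [if_neg hAF] using compress_lt hA hAF⟩)
  split_ifs with hBF
  · rfl
  · exact (compress_lt hB hBF).le

end RankSum

lemma exists_isCompressed [Finite α] [LinearOrder α] {F : Finset (Finset α)} {m k : ℕ}
    (hk : (F : Set (Finset α)).Sized k) (hm : MatchingFree m F)
    {Q : Finset (Finset α) → Prop} (hQ : Q F) :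
    ∃ G : Finset (Finset α), #G = #F ∧ (G : Set (Finset α)).Sized k ∧ MatchingFree m G ∧ Q G ∧
      ∀ i j, i < j → Q (𝓒 {i} {j} G) → UV.IsCompressed {i} {j} G := by
  have := Fintype.ofFinite α
  obtain ⟨G, ⟨hGF, hGk, hGm, hGQ⟩, hmin⟩ := exists_minimalFor_of_wellFoundedLT
    (fun G : Finset (Finset α) ↦ #G = #F ∧ (G : Set (Finset α)).Sized k ∧ MatchingFree m G ∧ Q G)
    rankSum ⟨F, rfl, hk, hm, hQ⟩
  refine ⟨G, hGF, hGk, hGm, hGQ, fun i j hij hQ' ↦ ?_⟩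
  by_contra hG
  have hlt := rankSum_compression_lt hij hG
  refine hlt.not_ge (hmin ⟨?_, hGk.uvCompression (by simp), hGm.compression i j, hQ'⟩ hlt.le)
  rw [UV.card_compression, hGF]

section InitialSegments

variable [LinearOrder α] {F : Finset (Finset α)} {W Z A : Finset α}

/-- `F` is shifted (left-compressed) with respect to all pairs of vertices of `W`. -/
def ShiftedOn (W : Finset α) (F : Finset (Finset α)) : Prop :=
  ∀ i ∈ W, ∀ j ∈ W, i < j → ∀ A ∈ F, j ∈ A → i ∉ A → insert i (A.erase j) ∈ F

/-- `Z` consists of the `#Z` smallest elements of `W`. -/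
def IsInitialSegment (Z W : Finset α) : Prop :=
  Z ⊆ W ∧ ∀ z ∈ Z, ∀ w ∈ W \ Z, z < w

lemma exists_isInitialSegment {c : ℕ} (hc : c ≤ #W) : ∃ Z, IsInitialSegment Z W ∧ #Z = c := by
  induction W using Finset.induction_on_max with
  | empty => exact ⟨∅, by simp [IsInitialSegment], by simpa [eq_comm] using hc⟩
  | insert a W ha ih =>
    have haW : a ∉ W := fun h ↦ lt_irrefl _ (ha a h)
    rw [card_insert_of_notMem haW] at hc
    obtain hc | rfl := Nat.le_succ_iff.1 hc
    · obtain ⟨Z, ⟨hZW, hZ⟩, rfl⟩ := ih hc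
      refine ⟨Z, ⟨hZW.trans (subset_insert _ _), fun z hz w hw ↦ ?_⟩, rfl⟩
      obtain ⟨hw, hwZ⟩ := mem_sdiff.1 hw
      obtain rfl | hw := mem_insert.1 hw
      · exact ha z (hZW hz)
      · exact hZ z hz w (mem_sdiff.2 ⟨hw, hwZ⟩)
    · exact ⟨insert a W, by simp [IsInitialSegment], card_insert_of_notMem haW⟩

lemma ShiftedOn.sdiff_union_mem (hF : ShiftedOn W F) (hZ : IsInitialSegment Z W) (hA : A ∈ F)
    (hAW : #(A ∩ W) = #Z) : A \ W ∪ Z ∈ F := by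
  obtain ⟨hZW, hlt⟩ := hZ
  induction hc : #(Z \ A) generalizing A with
  | zero =>
    have hZA : Z = A ∩ W :=
      eq_of_subset_of_card_le (subset_inter (by simpa using hc) hZW) hAW.le
    rwa [hZA, sdiff_union_inter]
  | succ c ih =>
    obtain ⟨i, hi⟩ : (Z \ A).Nonempty := card_pos.1 (by omega)
    obtain ⟨hiZ, hiA⟩ := mem_sdiff.1 hi
    obtain ⟨j, hj, hjZ⟩ : ∃ j ∈ A ∩ W, j ∉ Z := by
      by_contra! h
      exact hiA (mem_inter.1 (eq_of_subset_of_card_le h hAW.ge ▸ hiZ)).1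
    obtain ⟨hjA, hjW⟩ := mem_inter.1 hj
    have mem := hF i (hZW hiZ) j hjW (hlt i hiZ j (mem_sdiff.2 ⟨hjW, hjZ⟩)) A hA hjA hiA
    have inter_eq : insert i (A.erase j) ∩ W = insert i ((A ∩ W).erase j) := by grind
    have sdiff_eq : Z \ insert i (A.erase j) = (Z \ A).erase i := by grind
    have h := ih mem
      (by rw [inter_eq, card_insert_of_notMem (by simp [hiA]), card_erase_add_one hj, hAW])
      (by rw [sdiff_eq, card_erase_of_mem hi, hc, Nat.add_sub_cancel])
    rwa [show insert i (A.erase j) \ W = A \ W by grind] at h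

end InitialSegments

section Shadow

variable [DecidableEq α] {H : Finset (Finset α)} {W : Finset α} {a : α} {k s : ℕ}

lemma card_mul_le_card_shadow_mul_of_subset (hH : H ⊆ powersetCard (k + 1) W) :
    #H * (k + 1) ≤ #(∂ H) * (#W - k) := by
  have hHk : (H : Set (Finset α)).Sized (k + 1) := fun A hA ↦ (mem_powersetCard.1 (hH hA)).2
  refine card_mul_le_card_mul (fun A B ↦ B ⊆ A) (fun A hA ↦ ?_) fun B hB ↦ ?_
  · rw [← hHk hA, ← card_image_of_injOn A.erase_injOn]
    refine card_le_card (image_subset_iff.2 fun a ha ↦ ?_)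
    exact (mem_bipartiteAbove _).2 ⟨erase_mem_shadow hA ha, erase_subset a A⟩
  · have hBk : #B = k := hHk.shadow hB
    obtain ⟨b, -, hb⟩ := mem_shadow_iff_insert_mem.1 hB
    have hBW : B ⊆ W := (subset_insert b B).trans (mem_powersetCard.1 (hH hb)).1
    calc #{A ∈ H | B ⊆ A} ≤ #((W \ B).image fun a ↦ insert a B) := card_le_card fun A hA ↦ by
          obtain ⟨hAH, hBA⟩ := mem_filter.1 hA
          obtain ⟨a, haB, rfl⟩ := exists_eq_insert_iff.2 ⟨hBA, by rw [hBk, hHk hAH]⟩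
          have haW := (mem_powersetCard.1 (hH hAH)).1 (mem_insert_self a B)
          exact mem_image_of_mem _ (mem_sdiff.2 ⟨haW, haB⟩)
      _ ≤ #(W \ B) := card_image_le
      _ = #W - k := by rw [card_sdiff_of_subset hBW, hBk]

lemma card_shadow_nonMemberSubfamily_add_card_shadow_memberSubfamily_le (a : α)
    (H : Finset (Finset α)) :
    #(∂ (H.nonMemberSubfamily a)) + #(∂ (H.memberSubfamily a)) ≤ #(∂ H) := by
  rw [← card_memberSubfamily_add_card_nonMemberSubfamily a (∂ H), add_comm]
  gcongr
  · intro B hB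
    obtain ⟨b, hb, hbH⟩ := mem_shadow_iff_insert_mem.1 hB
    obtain ⟨hbH, hab⟩ := mem_memberSubfamily.1 hbH
    have hba : b ≠ a := fun h ↦ hab (h ▸ mem_insert_self b B)
    refine mem_memberSubfamily.2 ⟨mem_shadow_iff_insert_mem.2 ⟨b, ?_, ?_⟩, ?_⟩
    · simpa [hba] using hb
    · rwa [insert_comm]
    · exact fun h ↦ hab (mem_insert_of_mem h)
  · intro B hB
    obtain ⟨b, hb, hbH⟩ := mem_shadow_iff_insert_mem.1 hB
    obtain ⟨hbH, hab⟩ := mem_nonMemberSubfamily.1 hbH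
    refine mem_nonMemberSubfamily.2 ⟨mem_shadow_iff_insert_mem.2 ⟨b, hb, hbH⟩, ?_⟩
    exact fun h ↦ hab (mem_insert_of_mem h)

lemma memberSubfamily_subset_powersetCard (hH : H ⊆ powersetCard (k + 1) (insert a W)) :
    H.memberSubfamily a ⊆ powersetCard k W := fun B hB ↦ by
  obtain ⟨hBH, haB⟩ := mem_memberSubfamily.1 hB
  obtain ⟨hBW, hBk⟩ := mem_powersetCard.1 (hH hBH)
  rw [card_insert_of_notMem haB] at hBk
  exact mem_powersetCard.2 ⟨(insert_subset_insert_iff haB).1 hBW, Nat.succ_injective hBk⟩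

lemma nonMemberSubfamily_subset_powersetCard (hH : H ⊆ powersetCard k (insert a W)) :
    H.nonMemberSubfamily a ⊆ powersetCard k W := fun B hB ↦ by
  obtain ⟨hBH, haB⟩ := mem_nonMemberSubfamily.1 hB
  obtain ⟨hBW, hBk⟩ := mem_powersetCard.1 (hH hBH)
  exact mem_powersetCard.2 ⟨(subset_insert_iff_of_notMem haB).1 hBW, hBk⟩

end Shadow

section ShiftedShadow

variable [LinearOrder α] {H : Finset (Finset α)} {W : Finset α} {a : α} {k s : ℕ}

lemma ShiftedOn.nonMemberSubfamily (hH : ShiftedOn W H) (ha : a ∉ W) :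
    ShiftedOn W (H.nonMemberSubfamily a) := by
  intro i hi j hj hij A hA hjA hiA
  obtain ⟨hA, haA⟩ := mem_nonMemberSubfamily.1 hA
  exact mem_nonMemberSubfamily.2 ⟨hH i hi j hj hij A hA hjA hiA, by grind⟩

lemma ShiftedOn.memberSubfamily (hH : ShiftedOn W H) (ha : a ∉ W) :
    ShiftedOn W (H.memberSubfamily a) := by
  intro i hi j hj hij A hA hjA hiA
  obtain ⟨hA, haA⟩ := mem_memberSubfamily.1 hA
  refine mem_memberSubfamily.2 ⟨?_, by grind⟩
  convert hH i hi j hj hij _ hA (mem_insert_of_mem hjA) (by grind) using 1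
  grind

lemma MatchingFree.memberSubfamily {m : ℕ} (hm : MatchingFree m H)
    (hH : H ⊆ powersetCard (k + 1) (insert a W)) (hS : ShiftedOn (insert a W) H)
    (haW : ∀ w ∈ W, w < a) (hW : m * (k + 1) ≤ #(insert a W)) :
    MatchingFree m (H.memberSubfamily a) := by
  intro f hf hd
  have mem_insert_H (i) := (mem_memberSubfamily.1 (hf i)).1
  have notMem (i) := (mem_memberSubfamily.1 (hf i)).2
  have card_biUnion_le : #(univ.biUnion f) ≤ m * k := by
    calc #(univ.biUnion f) ≤ ∑ i, #(f i) := card_biUnion_le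
      _ = m * k := by
        simp [fun i ↦ (mem_powersetCard.1 (memberSubfamily_subset_powersetCard hH (hf i))).2]
  obtain ⟨e, he⟩ : ∃ e : Fin m ↪ α, Set.range e ⊆ (insert a W \ univ.biUnion f : Finset α) := by
    refine Embedding.exists_of_card_le_finset ?_
    have := le_card_sdiff (univ.biUnion f) (insert a W)
    rw [Nat.mul_succ] at hW
    rw [Fintype.card_fin]
    omega
  have heW (i) : e i ∈ insert a W := (mem_sdiff.1 (he ⟨i, rfl⟩)).1
  have hef (i j) : e i ∉ f j := fun h ↦
    (mem_sdiff.1 (he ⟨i, rfl⟩)).2 (mem_biUnion.2 ⟨j, mem_univ j, h⟩)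
  refine hm (fun i ↦ insert (e i) (f i)) (fun i ↦ ?_) fun i j hij ↦ ?_
  · obtain hi | hi := mem_insert.1 (heW i)
    · rw [hi]
      exact mem_insert_H i
    · have := hS _ (heW i) a (mem_insert_self a W) (haW _ hi) _ (mem_insert_H i)
        (mem_insert_self a _) (by simp [hef, (haW _ hi).ne])
      rwa [erase_insert (notMem i)] at this
  · simp [onFun, hef, hij.symm, hd hij]

theorem card_le_mul_card_shadow (hH : H ⊆ powersetCard k W) (hS : ShiftedOn W H)
    (hm : MatchingFree (s + 1) H) : #H ≤ s * #(∂ H) := by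
  induction W using Finset.induction_on_max generalizing k H with
  | empty => simp [hm.eq_empty fun _ hA ↦ subset_empty.1 (mem_powersetCard.1 (hH hA)).1]
  | insert a W haW ih =>
    have ha : a ∉ W := fun h ↦ lt_irrefl a (haW a h)
    obtain _ | k := k
    · simp [hm.eq_empty fun _ hA ↦ card_eq_zero.1 (mem_powersetCard.1 (hH hA)).2]
    obtain hW | hW := lt_or_ge #(insert a W) ((s + 1) * (k + 1))
    · refine Nat.le_of_mul_le_mul_right ?_ k.succ_pos
      calc #H * (k + 1) ≤ #(∂ H) * (#(insert a W) - k) := card_mul_le_card_shadow_mul_of_subset hH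
        _ ≤ #(∂ H) * (s * (k + 1)) := by
          gcongr
          rw [Nat.succ_mul] at hW
          omega
        _ = s * #(∂ H) * (k + 1) := by ring
    have hSW : ShiftedOn W H := fun i hi j hj ↦
      hS i (mem_insert_of_mem hi) j (mem_insert_of_mem hj)
    calc #H = #(H.nonMemberSubfamily a) + #(H.memberSubfamily a) := by
          rw [add_comm, card_memberSubfamily_add_card_nonMemberSubfamily]
      _ ≤ s * #(∂ (H.nonMemberSubfamily a)) + s * #(∂ (H.memberSubfamily a)) := by
          gcongr
          · exact ih (nonMemberSubfamily_subset_powersetCard hH) (hSW.nonMemberSubfamily ha)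
              (hm.mono (filter_subset _ _))
          · exact ih (memberSubfamily_subset_powersetCard hH) (hSW.memberSubfamily ha)
              (hm.memberSubfamily hH hS haW hW)
      _ ≤ s * #(∂ H) := by
          rw [← mul_add]
          gcongr
          exact card_shadow_nonMemberSubfamily_add_card_shadow_memberSubfamily_le a H

end ShiftedShadow

section Binomials

lemma choose_add_le (N q k : ℕ) :
    (N + q).choose (k + 1) ≤ N.choose (k + 1) + q * (N + q - 1).choose k := by
  induction q with
  | zero => simp
  | succ q ih =>
    calc (N + q + 1).choose (k + 1) = (N + q).choose k + (N + q).choose (k + 1) :=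
          Nat.choose_succ_succ _ _
      _ ≤ (N + q).choose k + (N.choose (k + 1) + q * (N + q).choose k) := by
          gcongr
          exact ih.trans (by gcongr; omega)
      _ = N.choose (k + 1) + (q + 1) * (N + (q + 1) - 1).choose k := by
          rw [← add_assoc N, Nat.add_sub_cancel]
          ring

lemma choose_le_two_mul_choose_sub {N k : ℕ} (h : 2 * k ^ 2 ≤ N) :
    N.choose k ≤ 2 * (N - k).choose k := by
  obtain _ | k := k
  · simp
  obtain ⟨N, rfl⟩ : ∃ M, N = M + 1 :=
    Nat.exists_eq_add_one.2 ((by positivity : 0 < 2 * (k + 1) ^ 2).trans_le h)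
  have hkN : k + 1 ≤ N + 1 := by nlinarith
  have choose_le := choose_add_le (N + 1 - (k + 1)) (k + 1) k
  rw [Nat.sub_add_cancel hkN, Nat.add_sub_cancel] at choose_le
  have mul_choose_le : 2 * ((k + 1) * N.choose k) ≤ (N + 1).choose (k + 1) := by
    refine Nat.le_of_mul_le_mul_left ?_ k.succ_pos
    calc (k + 1) * (2 * ((k + 1) * N.choose k)) = 2 * (k + 1) ^ 2 * N.choose k := by ring
      _ ≤ (N + 1) * N.choose k := by gcongr
      _ = (k + 1) * (N + 1).choose (k + 1) := by rw [Nat.add_one_mul_choose_eq, mul_comm]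
  omega

end Binomials

section Counting

variable [DecidableEq α]

lemma card_eq_sum_card_filter_inter (F : Finset (Finset α)) (X : Finset α) :
    #F = #{A ∈ F | Disjoint A X} + #{A ∈ F | #(A ∩ X) = 1} + #{A ∈ F | 1 < #(A ∩ X)} := by
  simp only [disjoint_iff_inter_eq_empty, ← card_eq_zero, card_filter, card_eq_sum_ones F,
    ← sum_add_distrib]
  refine sum_congr rfl fun A _ ↦ ?_
  split_ifs <;> omega

variable [Fintype α] {F : Finset (Finset α)} {X : Finset α} {k : ℕ}

lemma card_filter_card_inter_eq_one (hF : (F : Set (Finset α)).Sized (k + 1)) (X : Finset α) :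
    #{A ∈ F | #(A ∩ X) = 1} = ∑ B ∈ powersetCard k Xᶜ, #(extensions F X B) := by
  have maps_to : ∀ A ∈ ({A ∈ F | #(A ∩ X) = 1} : Finset _), A \ X ∈ powersetCard k Xᶜ := by
    intro A hA
    obtain ⟨hAF, hAX⟩ := mem_filter.1 hA
    have := card_sdiff_add_card_inter A X
    rw [hF hAF, hAX] at this
    exact mem_powersetCard.2 ⟨fun a ha ↦ mem_compl.2 (mem_sdiff.1 ha).2, by omega⟩
  rw [card_eq_sum_card_fiberwise maps_to]
  refine sum_congr rfl fun B hB ↦ ?_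
  have notMem : ∀ x ∈ X, x ∉ B := fun x hx hxB ↦
    mem_compl.1 ((mem_powersetCard.1 hB).1 hxB) hx
  rw [← card_image_of_injOn (s := extensions F X B) (f := fun x ↦ insert x B)
    ((insert_inj_on' B).mono fun x hx ↦ mem_compl.2 (notMem x (mem_extensions.1 hx).1))]
  congr 1
  ext A
  simp only [mem_filter, mem_image, mem_extensions]
  constructor
  · rintro ⟨⟨hAF, hAX⟩, rfl⟩
    obtain ⟨x, hx⟩ := card_eq_one.1 hAX
    have hxA : x ∈ A ∩ X := by simp [hx]
    have insert_sdiff : insert x (A \ X) = A := by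
      rw [insert_eq, ← hx, union_comm, sdiff_union_inter]
    exact ⟨x, ⟨(mem_inter.1 hxA).2, by rwa [insert_sdiff]⟩, insert_sdiff⟩
  · rintro ⟨x, ⟨hx, hxF⟩, rfl⟩
    refine ⟨⟨hxF, card_eq_one.2 ⟨x, ?_⟩⟩, ?_⟩
    · grind
    · grind

lemma card_add_choose_add_mul_choose_le (hF : (F : Set (Finset α)).Sized (k + 1)) (X : Finset α) :
    #F + (#Xᶜ).choose (k + 1) + #X * (#Xᶜ).choose k ≤
      (Fintype.card α).choose (k + 1) + ∑ B ∈ powersetCard k Xᶜ, #(extensions F X B) +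
        #{A ∈ F | Disjoint A X} := by
  set U : Finset (Finset α) := powersetCard (k + 1) univ
  have hU : (U : Set (Finset α)).Sized (k + 1) := fun A hA ↦ (mem_powersetCard.1 hA).2
  have hFU : F ⊆ U := fun A hA ↦ mem_powersetCard.2 ⟨subset_univ A, hF hA⟩
  have card_U : #U = (Fintype.card α).choose (k + 1) := by rw [card_powersetCard, card_univ]
  have filter_disjoint_U : {A ∈ U | Disjoint A X} = powersetCard (k + 1) Xᶜ := by
    ext A
    simp [U, subset_compl_iff_disjoint_right, and_comm]
  have extensions_U : ∀ B ∈ powersetCard k Xᶜ, extensions U X B = X := by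
    refine fun B hB ↦ filter_true_of_mem fun x hx ↦ ?_
    obtain ⟨hBX, hBk⟩ := mem_powersetCard.1 hB
    have hxB : x ∉ B := fun h ↦ mem_compl.1 (hBX h) hx
    exact mem_powersetCard.2 ⟨subset_univ _, by rw [card_insert_of_notMem hxB, hBk]⟩
  have sum_U : ∑ B ∈ powersetCard k Xᶜ, #(extensions U X B) = #X * (#Xᶜ).choose k := by
    rw [sum_congr rfl fun B hB ↦ congrArg card (extensions_U B hB), sum_const, card_powersetCard,
      smul_eq_mul, mul_comm]
  have split_F := card_eq_sum_card_filter_inter F X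
  have split_U := card_eq_sum_card_filter_inter U X
  rw [card_filter_card_inter_eq_one hF] at split_F
  rw [card_filter_card_inter_eq_one hU, sum_U, filter_disjoint_U, card_U,
    card_powersetCard] at split_U
  have := card_le_card (filter_subset_filter (fun A ↦ 1 < #(A ∩ X)) hFU)
  omega

end Counting

section FullSets

variable [DecidableEq α] {F : Finset (Finset α)} {X Y Z : Finset α} {k s : ℕ}

/-- The `k`-subsets of `Y` all of whose one-point extensions by vertices of `X` lie in `F`. -/
def fullSets (F : Finset (Finset α)) (X Y : Finset α) (k : ℕ) : Finset (Finset α) :=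
  {B ∈ powersetCard k Y | extensions F X B = X}

lemma mem_fullSets {B : Finset α} :
    B ∈ fullSets F X Y k ↔ B ∈ powersetCard k Y ∧ ∀ x ∈ X, insert x B ∈ F := by
  simp only [fullSets, extensions, mem_filter, filter_eq_self]

lemma sum_card_extensions_add_mul_card_fullSets_le {m : ℕ} (hF : MatchingFree (s + 1) F)
    (hX : #X = s + 1) (hXY : Disjoint X Y) (hm : s < m) (hY : m * k ≤ #Y) :
    ∑ B ∈ powersetCard k Y, #(extensions F X B) + (m - (s + 1)) * #(fullSets F X Y k) ≤
      s * (#Y).choose k := by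
  calc ∑ B ∈ powersetCard k Y, #(extensions F X B) + (m - (s + 1)) * #(fullSets F X Y k)
      = ∑ B ∈ powersetCard k Y,
          if #(extensions F X B) < s + 1 then #(extensions F X B) else m := by
        rw [fullSets, card_filter, mul_sum, ← sum_add_distrib]
        refine sum_congr rfl fun B _ ↦ ?_
        obtain hB | hB := eq_or_ne (extensions F X B) X
        · rw [if_pos hB, hB, hX, if_neg (lt_irrefl _)]
          omega
        · have := card_lt_card ((extensions_subset F X B).ssubset_of_ne hB)
          rw [if_neg hB, if_pos (hX ▸ this), mul_zero, add_zero]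
    _ ≤ s * (#Y).choose k :=
        sum_powersetCard_ite_card_lt_le (by omega) hY fun B hB hBd ↦
          hF.not_hasPartialTransversal (fun j ↦ hXY.mono_right (mem_powersetCard.1 (hB j)).1) hBd

lemma sum_min_card_extensions_add_choose_le {m : ℕ} (hs : 0 < s) (hF : MatchingFree (s + 1) F)
    (hX : #X = s + 1) (hXY : Disjoint X Y) (hZ : Z ∈ fullSets F X Y k) (hm : s ≤ m)
    (hY : (m + 1) * k ≤ #Y) :
    ∑ B ∈ powersetCard k Y, min #(extensions F X B) s + (#Y - k).choose k ≤
      s * (#Y).choose k := by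
  obtain ⟨hZpow, hZX⟩ := mem_filter.1 hZ
  obtain ⟨hZY, hZk⟩ := mem_powersetCard.1 hZpow
  have card_Y_sdiff : #(Y \ Z) = #Y - k := by rw [card_sdiff_of_subset hZY, hZk]
  have sum_off_Z : ∑ B ∈ powersetCard k (Y \ Z), min #(extensions F X B) s ≤
      (s - 1) * (#Y - k).choose k := by
    rw [← card_Y_sdiff]
    calc ∑ B ∈ powersetCard k (Y \ Z), min #(extensions F X B) s
        ≤ ∑ B ∈ powersetCard k (Y \ Z),
            if #(extensions F X B) < s then #(extensions F X B) else m := by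
          refine sum_le_sum fun B _ ↦ ?_
          split_ifs <;> omega
      _ ≤ (s - 1) * (#(Y \ Z)).choose k :=
          sum_powersetCard_ite_card_lt_le (hs.trans_le hm)
            (by rw [card_Y_sdiff]; exact Nat.le_sub_of_add_le (by linarith)) fun B hB hBd ↦ by
              have hBYZ : ∀ j, B j ⊆ Y \ Z := fun j ↦ (mem_powersetCard.1 (hB j)).1
              exact hF.not_hasPartialTransversal_of_extensions_eq (by omega)
                (hXY.mono_right hZY) hZX (fun j ↦ hXY.mono_right ((hBYZ j).trans sdiff_subset))
                (fun j ↦ disjoint_sdiff.mono_right (hBYZ j)) hBd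
  have hsub : powersetCard k (Y \ Z) ⊆ powersetCard k Y := powersetCard_mono sdiff_subset
  have card_meeting : #(powersetCard k Y \ powersetCard k (Y \ Z)) + (#Y - k).choose k =
      (#Y).choose k := by
    rw [← card_Y_sdiff, ← card_powersetCard, ← card_powersetCard, card_sdiff_add_card_eq_card hsub]
  have sum_meeting : ∑ B ∈ powersetCard k Y \ powersetCard k (Y \ Z), min #(extensions F X B) s ≤
      s * #(powersetCard k Y \ powersetCard k (Y \ Z)) := by
    rw [mul_comm, ← smul_eq_mul]
    exact sum_le_card_nsmul _ _ _ fun B _ ↦ min_le_right _ _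
  have sum_split := sum_sdiff hsub (f := fun B ↦ min #(extensions F X B) s)
  obtain ⟨t, rfl⟩ : ∃ t, s = t + 1 := Nat.exists_eq_add_one.2 hs
  rw [Nat.add_sub_cancel] at sum_off_Z
  rw [← card_meeting, ← sum_split]
  linarith

lemma sum_card_extensions_eq (hX : #X = s + 1) :
    ∑ B ∈ powersetCard k Y, #(extensions F X B) =
      ∑ B ∈ powersetCard k Y, min #(extensions F X B) s + #(fullSets F X Y k) := by
  rw [fullSets, card_filter, ← sum_add_distrib]
  refine sum_congr rfl fun B _ ↦ ?_
  obtain hB | hB := eq_or_ne (extensions F X B) X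
  · rw [if_pos hB, hB]
    omega
  · have := card_lt_card ((extensions_subset F X B).ssubset_of_ne hB)
    rw [if_neg hB]
    omega

lemma card_add_choose_le_of_nonempty_fullSets [Fintype α] (hs : 0 < s) (hk : 2 * s ≤ k)
    (hα : 2 * (k + 1) ^ 2 ≤ Fintype.card α) (hF : (F : Set (Finset α)).Sized (k + 1))
    (hm : MatchingFree (s + 1) F) (hX : #X = s + 1) (hfull : (fullSets F X Xᶜ k).Nonempty)
    (hdisj : #{A ∈ F | Disjoint A X} ≤ s * #(fullSets F X Xᶜ k)) :
    3 * #F + 3 * (Fintype.card α - s).choose (k + 1) + (Fintype.card α - s - 1).choose k ≤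
      3 * (Fintype.card α).choose (k + 1) := by
  obtain ⟨Z, hZ⟩ := hfull
  have card_compl_X : #Xᶜ = Fintype.card α - s - 1 := by rw [card_compl, hX, Nat.sub_sub]
  have le_card_compl_X : (2 * k + 3) * k ≤ #Xᶜ := by
    rw [card_compl_X, Nat.sub_sub]
    exact Nat.le_sub_of_add_le (by nlinarith)
  have bound_I := sum_card_extensions_add_mul_card_fullSets_le hm hX disjoint_compl_right
    (by omega) le_card_compl_X
  have bound_II := sum_min_card_extensions_add_choose_le hs hm hX disjoint_compl_right hZ
    (by omega) le_card_compl_X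
  have sum_eq := sum_card_extensions_eq (F := F) (Y := Xᶜ) (k := k) hX
  have choose_le : (#Xᶜ).choose k ≤ 2 * (#Xᶜ - k).choose k :=
    choose_le_two_mul_choose_sub (by nlinarith)
  have count := card_add_choose_add_mul_choose_le hF X
  have pascal : (Fintype.card α - s).choose (k + 1) = (#Xᶜ).choose k + (#Xᶜ).choose (k + 1) := by
    rw [← Nat.choose_succ_succ, card_compl_X, Nat.succ_eq_add_one,
      Nat.sub_add_cancel (Nat.le_sub_of_add_le (by nlinarith))]
  have mul_full_le : (3 * s + 2) * #(fullSets F X Xᶜ k) ≤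
      (2 * k + 3 - (s + 1)) * #(fullSets F X Xᶜ k) := Nat.mul_le_mul_right _ (by omega)
  rw [hX] at count
  rw [← card_compl_X]
  -- `bound_I + 2 * bound_II`: the blocks added twice by `bound_II` are paid for by `bound_I`.
  linarith

end FullSets

section Stability

variable [LinearOrder α] {F : Finset (Finset α)} {X : Finset α} {k s : ℕ}

lemma Covers.insert_of_compression {T : Finset α} {i j : α} (h : Covers T (𝓒 {i} {j} F)) :
    Covers (insert j T) F := by
  intro A hA hd
  obtain ⟨hjA, hAT⟩ := disjoint_insert_right.1 hd
  refine h A ?_ hAT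
  have compress_eq : UV.compress {i} {j} A = A := by
    rw [UV.compress, if_neg]
    simpa using fun _ ↦ hjA
  exact UV.mem_compression.2 (.inl ⟨hA, by rwa [compress_eq]⟩)

variable [Fintype α]

lemma ShiftedOn.mem_fullSets_of_covers {Z : Finset α} (hS : ShiftedOn Xᶜ F)
    (hF : (F : Set (Finset α)).Sized (k + 1)) (hcov : Covers X F)
    (hmin : ∀ x ∈ X, ¬ Covers (X.erase x) F) (hZ : IsInitialSegment Z Xᶜ) (hZk : #Z = k) :
    Z ∈ fullSets F X Xᶜ k := by
  refine mem_fullSets.2 ⟨mem_powersetCard.2 ⟨hZ.1, hZk⟩, fun x hx ↦ ?_⟩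
  obtain ⟨A, hA, hAx⟩ : ∃ A ∈ F, Disjoint A (X.erase x) := by
    simpa [Covers] using hmin x hx
  have sdiff_eq : A \ Xᶜ = {x} := by
    obtain ⟨y, hyA, hyX⟩ := not_disjoint_iff.1 (hcov A hA)
    have eq_x : ∀ z ∈ A, z ∈ X → z = x := fun z hz hzX ↦ by
      by_contra hzx
      exact disjoint_left.1 hAx hz (mem_erase.2 ⟨hzx, hzX⟩)
    obtain rfl := eq_x y hyA hyX
    rw [sdiff_compl, eq_singleton_iff_unique_mem]
    exact ⟨mem_inter.2 ⟨hyA, hyX⟩, fun z hz ↦ eq_x z (mem_inter.1 hz).1 (mem_inter.1 hz).2⟩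
  have card_inter : #(A ∩ Xᶜ) = #Z := by
    have := card_sdiff_add_card_inter A Xᶜ
    rw [sdiff_eq, card_singleton, hF hA] at this
    omega
  have := hS.sdiff_union_mem hZ hA card_inter
  rwa [sdiff_eq, ← insert_eq] at this

lemma ShiftedOn.mem_fullSets_of_not_covers {Z : Finset α} (hS : ShiftedOn univ F)
    (hF : (F : Set (Finset α)).Sized (k + 1)) (hX : IsInitialSegment X univ)
    (hmin : ∀ x ∈ X, ¬ Covers (X.erase x) F) (hZ : IsInitialSegment Z Xᶜ) (hZk : #Z = k) :
    Z ∈ fullSets F X Xᶜ k := by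
  refine mem_fullSets.2 ⟨mem_powersetCard.2 ⟨hZ.1, hZk⟩, fun x hx ↦ ?_⟩
  obtain ⟨A, hA, hAx⟩ : ∃ A ∈ F, Disjoint A (X.erase x) := by
    simpa [Covers] using hmin x hx
  have subset_compl : A ⊆ (X.erase x)ᶜ := subset_compl_iff_disjoint_right.2 hAx
  have hxZ : x ∉ Z := fun h ↦ mem_compl.1 (hZ.1 h) hx
  have isInitialSegment_insert : IsInitialSegment (insert x Z) (X.erase x)ᶜ := by
    rw [compl_erase]
    refine ⟨insert_subset_insert x hZ.1, fun z hz w hw ↦ ?_⟩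
    obtain ⟨hwX, hwZ⟩ : w ∈ Xᶜ ∧ w ∉ Z := by grind
    obtain rfl | hz := mem_insert.1 hz
    · exact hX.2 z hx w (by simpa using hwX)
    · exact hZ.2 z hz w (mem_sdiff.2 ⟨hwX, hwZ⟩)
  have shifted : ShiftedOn (X.erase x)ᶜ F := fun i _ j _ ↦ hS i (mem_univ i) j (mem_univ j)
  have := shifted.sdiff_union_mem isInitialSegment_insert hA
    (by rw [inter_eq_left.2 subset_compl, hF hA, card_insert_of_notMem hxZ, hZk])
  rwa [sdiff_eq_empty_iff_subset.2 subset_compl, empty_union] at this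

lemma ShiftedOn.card_filter_disjoint_le (hS : ShiftedOn univ F)
    (hF : (F : Set (Finset α)).Sized (k + 1)) (hm : MatchingFree (s + 1) F)
    (hX : IsInitialSegment X univ) :
    #{A ∈ F | Disjoint A X} ≤ s * #(fullSets F X Xᶜ k) := by
  have hsub : {A ∈ F | Disjoint A X} ⊆ powersetCard (k + 1) Xᶜ := fun A hA ↦ by
    obtain ⟨hAF, hAX⟩ := mem_filter.1 hA
    exact mem_powersetCard.2 ⟨subset_compl_iff_disjoint_right.2 hAX, hF hAF⟩
  have shifted : ShiftedOn Xᶜ {A ∈ F | Disjoint A X} := fun i hi j _ hij A hA hjA hiA ↦ by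
    obtain ⟨hAF, hAX⟩ := mem_filter.1 hA
    exact mem_filter.2 ⟨hS i (mem_univ i) j (mem_univ j) hij A hAF hjA hiA,
      disjoint_insert_left.2 ⟨mem_compl.1 hi, hAX.mono_left (erase_subset j A)⟩⟩
  refine (card_le_mul_card_shadow hsub shifted (hm.mono (filter_subset _ F))).trans ?_
  gcongr
  intro B hB
  obtain ⟨A, hA, a, ha, rfl⟩ := mem_shadow_iff.1 hB
  obtain ⟨hAX, hAk⟩ := mem_powersetCard.1 (hsub hA)
  refine mem_fullSets.2 ⟨mem_powersetCard.2 ⟨(erase_subset a A).trans hAX, ?_⟩, fun x hx ↦ ?_⟩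
  · rw [card_erase_of_mem ha, hAk, Nat.add_sub_cancel]
  · exact hS x (mem_univ x) a (mem_univ a) (hX.2 x hx a (by simpa using hAX ha)) A
      (mem_filter.1 hA).1 ha fun hxA ↦ mem_compl.1 (hAX hxA) hx

lemma card_add_choose_le_of_covers (hs : 0 < s) (hk : 2 * s ≤ k)
    (hα : 2 * (k + 1) ^ 2 ≤ Fintype.card α) (hF : (F : Set (Finset α)).Sized (k + 1))
    (hm : MatchingFree (s + 1) F) (hX : #X = s + 1) (hcov : Covers X F)
    (hmin : ∀ x ∈ X, ¬ Covers (X.erase x) F) :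
    3 * #F + 3 * (Fintype.card α - s).choose (k + 1) + (Fintype.card α - s - 1).choose k ≤
      3 * (Fintype.card α).choose (k + 1) := by
  obtain ⟨G, hGF, hGk, hGm, ⟨hGcov, hGmin⟩, hG⟩ := exists_isCompressed hF hm
    (Q := fun G ↦ Covers X G ∧ ∀ x ∈ X, ¬ Covers (X.erase x) G) ⟨hcov, hmin⟩
  have shifted : ShiftedOn Xᶜ G := fun i hi j hj hij A hA hjA hiA ↦ by
    rw [mem_compl] at hi hj
    refine insert_erase_mem_of_isCompressed (hG i j hij ⟨?_, fun x hx ↦ ?_⟩) hA hjA hiA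
    · rwa [covers_compression_iff hi hj]
    · rw [covers_compression_iff (fun h ↦ hi (mem_of_mem_erase h)) fun h ↦ hj (mem_of_mem_erase h)]
      exact hGmin x hx
  obtain ⟨Z, hZ, hZk⟩ : ∃ Z, IsInitialSegment Z Xᶜ ∧ #Z = k :=
    exists_isInitialSegment (by rw [card_compl, hX]; exact Nat.le_sub_of_add_le (by nlinarith))
  rw [← hGF]
  refine card_add_choose_le_of_nonempty_fullSets hs hk hα hGk hGm hX
    ⟨Z, shifted.mem_fullSets_of_covers hGk hGcov hGmin hZ hZk⟩ ?_
  rw [filter_false_of_mem hGcov, card_empty]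
  exact Nat.zero_le _

lemma ShiftedOn.card_add_choose_le (hS : ShiftedOn univ F) (hs : 0 < s) (hk : 2 * s ≤ k)
    (hα : 2 * (k + 1) ^ 2 ≤ Fintype.card α) (hF : (F : Set (Finset α)).Sized (k + 1))
    (hm : MatchingFree (s + 1) F) (hcov : ∀ T, #T = s → ¬ Covers T F) :
    3 * #F + 3 * (Fintype.card α - s).choose (k + 1) + (Fintype.card α - s - 1).choose k ≤
      3 * (Fintype.card α).choose (k + 1) := by
  obtain ⟨X, hX, hXs⟩ : ∃ X : Finset α, IsInitialSegment X univ ∧ #X = s + 1 :=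
    exists_isInitialSegment (by rw [card_univ]; nlinarith)
  obtain ⟨Z, hZ, hZk⟩ : ∃ Z, IsInitialSegment Z Xᶜ ∧ #Z = k :=
    exists_isInitialSegment (by rw [card_compl, hXs]; exact Nat.le_sub_of_add_le (by nlinarith))
  have hmin : ∀ x ∈ X, ¬ Covers (X.erase x) F := fun x hx ↦
    hcov _ (by rw [card_erase_of_mem hx, hXs, Nat.add_sub_cancel])
  exact card_add_choose_le_of_nonempty_fullSets hs hk hα hF hm hXs
    ⟨Z, hS.mem_fullSets_of_not_covers hF hX hmin hZ hZk⟩ (hS.card_filter_disjoint_le hF hm hX)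

end Stability

theorem card_add_choose_le_of_not_covers [Fintype α] {F : Finset (Finset α)} {k s : ℕ} (hs : 0 < s)
    (hk : 2 * s ≤ k) (hα : 2 * (k + 1) ^ 2 ≤ Fintype.card α)
    (hF : (F : Set (Finset α)).Sized (k + 1)) (hm : MatchingFree (s + 1) F)
    (hcov : ∀ T, #T = s → ¬ Covers T F) :
    3 * #F + 3 * (Fintype.card α - s).choose (k + 1) + (Fintype.card α - s - 1).choose k ≤
      3 * (Fintype.card α).choose (k + 1) := by
  let : LinearOrder α := LinearOrder.lift' (Fintype.equivFin α) (Fintype.equivFin α).injective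
  obtain ⟨G, hGF, hGk, hGm, hGcov, hG⟩ := exists_isCompressed hF hm
    (Q := fun G ↦ ∀ T, #T = s → ¬ Covers T G) hcov
  rw [← hGF]
  by_cases hstable : ∀ i j, i < j → ∀ T, #T = s → ¬ Covers T (𝓒 {i} {j} G)
  · have shifted : ShiftedOn univ G := fun i _ j _ hij A hA hjA hiA ↦
      insert_erase_mem_of_isCompressed (hG i j hij (hstable i j hij)) hA hjA hiA
    exact shifted.card_add_choose_le hs hk hα hGk hGm hGcov
  · push Not at hstable
    obtain ⟨i, j, -, T, hT, hTG⟩ := hstable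
    have insert_covers := hTG.insert_of_compression
    have hjT : j ∉ T := fun hj ↦ hGcov T hT (by rwa [insert_eq_of_mem hj] at insert_covers)
    have card_insert : #(insert j T) = s + 1 := by rw [card_insert_of_notMem hjT, hT]
    exact card_add_choose_le_of_covers hs hk hα hGk hGm card_insert insert_covers fun x hx ↦
      hGcov _ (by rw [card_erase_of_mem hx, card_insert, Nat.add_sub_cancel])

section Degree

variable [DecidableEq α] [Fintype α] {F : Finset (Finset α)} {T : Finset α} {k s : ℕ}

lemma Covers.card_filter_mem_add_choose_le (hT : Covers T F)
    (hF : (F : Set (Finset α)).Sized (k + 1)) {v : α} (hv : v ∉ T) :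
    #{A ∈ F | v ∈ A} + (Fintype.card α - #T - 1).choose k ≤ (Fintype.card α - 1).choose k := by
  have image_subset : ({A ∈ F | v ∈ A}.image fun A ↦ A.erase v) ⊆
      powersetCard k (univ.erase v) \ powersetCard k (insert v T)ᶜ := by
    intro B hB
    obtain ⟨A, hA, rfl⟩ := mem_image.1 hB
    obtain ⟨hAF, hvA⟩ := mem_filter.1 hA
    refine mem_sdiff.2 ⟨mem_powersetCard.2 ⟨erase_subset_erase v (subset_univ A), ?_⟩, fun h ↦ ?_⟩
    · rw [card_erase_of_mem hvA, hF hAF, Nat.add_sub_cancel]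
    · refine hT A hAF (disjoint_left.2 fun a haA haT ↦ ?_)
      have := (mem_powersetCard.1 h).1 (mem_erase.2 ⟨fun h ↦ hv (h ▸ haT), haA⟩)
      simp [haT] at this
  have compl_subset : (insert v T)ᶜ ⊆ univ.erase v := by
    rw [← compl_singleton, compl_subset_compl, singleton_subset_iff]
    exact mem_insert_self v T
  have card_image : #({A ∈ F | v ∈ A}.image fun A ↦ A.erase v) = #{A ∈ F | v ∈ A} :=
    card_image_of_injOn ((erase_injOn' v).mono fun A hA ↦ (mem_filter.1 hA).2)
  calc #{A ∈ F | v ∈ A} + (Fintype.card α - #T - 1).choose k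
      = #({A ∈ F | v ∈ A}.image fun A ↦ A.erase v) + #(powersetCard k (insert v T)ᶜ) := by
        rw [card_image, card_powersetCard, card_compl, card_insert_of_notMem hv, Nat.sub_sub]
    _ ≤ #(powersetCard k (univ.erase v) \ powersetCard k (insert v T)ᶜ) +
          #(powersetCard k (insert v T)ᶜ) := by gcongr
    _ = (Fintype.card α - 1).choose k := by
        rw [card_sdiff_add_card_eq_card (powersetCard_mono compl_subset), card_powersetCard,
          card_erase_of_mem (mem_univ v), card_univ]

lemma exists_card_filter_mem_add_choose_le_of_card_add_choose_le (hk : 3 * s ≤ k + 1)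
    (hα : s < Fintype.card α) (hF : (F : Set (Finset α)).Sized (k + 1))
    (h : 3 * #F + 3 * (Fintype.card α - s).choose (k + 1) + (Fintype.card α - s - 1).choose k ≤
      3 * (Fintype.card α).choose (k + 1)) :
    ∃ v, #{A ∈ F | v ∈ A} + (Fintype.card α - s - 1).choose k ≤ (Fintype.card α - 1).choose k := by
  by_contra! degree_lt
  obtain ⟨r, hr⟩ := Nat.exists_eq_add_of_lt hα
  have card_sub : s + r + 1 - s = r + 1 := by omega
  simp only [hr, card_sub, Nat.add_sub_cancel] at degree_lt h
  have sum_degree : (s + r + 1) * ((s + r).choose k + 1 - r.choose k) ≤ (k + 1) * #F := by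
    calc (s + r + 1) * ((s + r).choose k + 1 - r.choose k) ≤ ∑ A ∈ F, #A := by
          rw [← hr]
          exact le_sum_card fun v ↦ Nat.sub_le_of_le_add (degree_lt v)
      _ = (k + 1) * #F := by
          rw [sum_congr rfl fun A hA ↦ hF hA, sum_const, smul_eq_mul, mul_comm]
  have degree_sum_lt :
      (s + r + 1) * (s + r).choose k < (k + 1) * #F + (s + r + 1) * r.choose k := by
    calc (s + r + 1) * (s + r).choose k < (s + r + 1) * ((s + r).choose k + 1) :=
          Nat.mul_lt_mul_of_pos_left (Nat.lt_succ_self _) (Nat.succ_pos _)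
      _ ≤ (s + r + 1) * ((s + r).choose k + 1 - r.choose k + r.choose k) :=
          Nat.mul_le_mul_left _ (by omega)
      _ ≤ (k + 1) * #F + (s + r + 1) * r.choose k := by rw [mul_add]; gcongr
  have absorb_all := Nat.add_one_mul_choose_eq (s + r) k
  have absorb_compl := Nat.add_one_mul_choose_eq r k
  have weight_le : 3 * s * r.choose k ≤ (k + 1) * r.choose k := Nat.mul_le_mul_right _ hk
  have := Nat.mul_le_mul_left (k + 1) h
  linarith

end Degree

end ErdosMatching

open ErdosMatching in
theorem degree_EMC_general {α : Type*} [DecidableEq α] [Fintype α] {F : Finset (Finset α)}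
    {k s : ℕ} (hs : 0 < s) (hα : 2 * k ^ 2 ≤ Fintype.card α) (hk : 3 * s ≤ k)
    (hF : (F : Set (Finset α)).Sized k) (hm : MatchingFree (s + 1) F) :
    ∃ v, (#{A ∈ F | v ∈ A} : ℤ) ≤
      (Fintype.card α - 1).choose (k - 1) - (Fintype.card α - s - 1).choose (k - 1) := by
  obtain ⟨k, rfl⟩ : ∃ j, k = j + 1 := Nat.exists_eq_add_one.2 (by omega)
  rw [Nat.add_sub_cancel]
  suffices ∃ v, #{A ∈ F | v ∈ A} + (Fintype.card α - s - 1).choose k ≤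
      (Fintype.card α - 1).choose k by
    obtain ⟨v, hv⟩ := this
    exact ⟨v, by omega⟩
  by_cases hcov : ∃ T, #T = s ∧ Covers T F
  · obtain ⟨T, rfl, hT⟩ := hcov
    obtain ⟨v, -, hv⟩ := exists_mem_notMem_of_card_lt_card (s := T) (t := univ)
      (by rw [card_univ]; nlinarith)
    exact ⟨v, hT.card_filter_mem_add_choose_le hF hv⟩
  · exact exists_card_filter_mem_add_choose_le_of_card_add_choose_le hk (by nlinarith) hF
      (card_add_choose_le_of_not_covers hs (by omega) hα hF hm fun T hTs hT ↦ hcov ⟨T, hTs, hT⟩)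

/-- Degree version of the Erdős Matching Conjecture, case t = 1 (Theorem 7):
if `n ≥ 2k²` and `k ≥ 3s`, then any family `F` of `k`-subsets of `[n]` with
matching number at most `s` satisfies `δ_1(F) ≤ C(n-1, k-1) - C(n-s-1, k-1)`. -/
theorem degree_EMC (n k s : ℕ) (hs : 0 < s)
    (hn : 2 * k ^ 2 ≤ n) (hk : 3 * s ≤ k)
    (F : Finset (Finset (Fin n)))
    (hcard : ∀ A ∈ F, A.card = k)
    (hmatch : ∀ M ⊆ F, (∀ A ∈ M, ∀ B ∈ M, A ≠ B → Disjoint A B) → M.card ≤ s) :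
    ∃ i : Fin n, ((F.filter (fun A => i ∈ A)).card : ℤ) ≤
      ((n - 1).choose (k - 1) : ℤ) - ((n - s - 1).choose (k - 1) : ℤ) := by
  have empty_notMem : ∅ ∉ F := fun h ↦ by have := hcard ∅ h; rw [card_empty] at this; omega
  simpa only [Fintype.card_fin] using degree_EMC_general hs (by rwa [Fintype.card_fin]) hk
    (fun A hA ↦ hcard A hA) (ErdosMatching.matchingFree_of_forall_card_le empty_notMem
      fun M hM hd ↦ hmatch M hM fun A hA B hB ↦ hd hA hB)
end

section
/- Let n > 2k ≥ 6 and let F be an intersecting family of k-element subsets of [n] with diversity γ(F) ≥ C(n-4, k-3). Then |F| ≤ C(n-2, k-2) + 2·C(n-3, k-2). -/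
/-!
Write `n = r + 4` and `k = c + 3`. The diversity hypothesis says that every point is avoided by at
least `C(r, c)` members of `F`. The `(k - 1)`-sets disjoint from some member avoiding `x` are not
traces of members through `x`, so it suffices to bound their number from below.

* If some `x` is avoided by at most `C(r + 1, c + 1)` members, Kruskal-Katona does this.
* Otherwise shift `F`, replacing `j` by a smaller `i`. This preserves the hypothesis unless fewer
  than `C(r, c)` members avoid both `i` and `j`. In that case the members meeting `{i, j}` in `∅`,
  `{i, j}` and in `{i}`, `{j}` give two cross-intersecting pairs of families on the remaining
  points, and Kruskal-Katona bounds each pair.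
* If `F` is already shifted, then the members avoiding the least point pairwise share two points,
  and Katona's intersecting shadow theorem replaces Kruskal-Katona.
-/

namespace LargeDiversity

open Finset Finset.Colex
open scoped FinsetFamily

section Shadows

variable {α : Type*} [DecidableEq α] {V : Finset α} {X : Finset (Finset α)} {l m : ℕ}

lemma falling_subset_powersetCard (hX : X ⊆ powersetCard m V) :
    falling l X ⊆ powersetCard l V := by
  intro U hU
  obtain ⟨⟨S, hS, hUS⟩, hUl⟩ := mem_falling.1 hU
  exact mem_powersetCard.2 ⟨hUS.trans (mem_powersetCard.1 (hX hS)).1, hUl⟩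

lemma iterate_shadow_eq_falling (hX : (X : Set (Finset α)).Sized m) (hlm : l ≤ m) :
    ∂^[m - l] X = falling l X := by
  ext U
  rw [mem_shadow_iterate_iff_exists_mem_card_add, mem_falling, ← exists_and_right]
  refine exists_congr fun S => ?_
  rw [and_assoc]
  refine and_congr_right fun hS => and_congr_right fun _ => ?_
  rw [hX hS]
  omega

lemma card_filter_superset_powersetCard_le {U : Finset α} (hUV : U ⊆ V) (hUm : #U ≤ m) :
    #{S ∈ powersetCard m V | U ⊆ S} ≤ (#V - #U).choose (m - #U) := by
  rw [← card_sdiff_of_subset hUV, ← card_powersetCard]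
  refine card_le_card_of_injOn (· \ U) (fun S hS => ?_) fun S hS S' hS' h => ?_
  · simp only [coe_filter, mem_powersetCard, Set.mem_ofPred_eq] at hS
    obtain ⟨⟨hSV, rfl⟩, hUS⟩ := hS
    exact mem_powersetCard.2 ⟨sdiff_subset_sdiff hSV Subset.rfl, card_sdiff_of_subset hUS⟩
  · rw [← sdiff_union_of_subset (mem_filter.1 hS).2, ← sdiff_union_of_subset (mem_filter.1 hS').2]
    exact congrArg (· ∪ U) h

lemma card_mul_choose_le_card_falling_mul_choose (hX : X ⊆ powersetCard m V) (hlm : l ≤ m) :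
    #X * (#V).choose l ≤ #(falling l X) * (#V).choose m := by
  have hcount : #X * m.choose l ≤ #(falling l X) * (#V - l).choose (m - l) := by
    refine card_mul_le_card_mul (fun S U => U ⊆ S) (fun S hS => ?_) fun U hU => ?_
    · rw [← (mem_powersetCard.1 (hX hS)).2, ← card_powersetCard]
      refine card_le_card fun U hU => ?_
      obtain ⟨hUS, hUl⟩ := mem_powersetCard.1 hU
      exact mem_filter.2 ⟨mem_falling.2 ⟨⟨S, hS, hUS⟩, hUl⟩, hUS⟩
    · obtain ⟨hUV, rfl⟩ := mem_powersetCard.1 (falling_subset_powersetCard hX hU)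
      exact (card_le_card (filter_subset_filter _ hX)).trans
        (card_filter_superset_powersetCard_le hUV hlm)
  refine Nat.le_of_mul_le_mul_right ?_ (Nat.choose_pos hlm)
  calc #X * (#V).choose l * m.choose l
      = #X * m.choose l * (#V).choose l := by ring
    _ ≤ #(falling l X) * (#V - l).choose (m - l) * (#V).choose l := by gcongr
    _ = #(falling l X) * ((#V).choose m * m.choose l) := by rw [Nat.choose_mul hlm]; ring
    _ = #(falling l X) * (#V).choose m * m.choose l := by ring

lemma card_le_card_falling (hX : X ⊆ powersetCard m V) (hlm : l ≤ m) (hV : #V = l + m) :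
    #X ≤ #(falling l X) := by
  have h := card_mul_choose_le_card_falling_mul_choose hX hlm
  rw [hV, Nat.choose_symm_add] at h
  exact Nat.le_of_mul_le_mul_right h (Nat.choose_pos (Nat.le_add_left m l))

lemma memberSubfamily_subset_powersetCard {z : α} (hX : X ⊆ powersetCard (m + 1) (insert z V)) :
    memberSubfamily z X ⊆ powersetCard m V := by
  intro S hS
  obtain ⟨hzS, hz⟩ := mem_memberSubfamily.1 hS
  obtain ⟨hSV, hSm⟩ := mem_powersetCard.1 (hX hzS)
  rw [card_insert_of_notMem hz] at hSm
  exact mem_powersetCard.2 ⟨(insert_subset_insert_iff hz).1 hSV, Nat.succ.inj hSm⟩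

lemma nonMemberSubfamily_subset_powersetCard {z : α} (hX : X ⊆ powersetCard m (insert z V)) :
    nonMemberSubfamily z X ⊆ powersetCard m V := by
  intro S hS
  obtain ⟨hSX, hz⟩ := mem_nonMemberSubfamily.1 hS
  obtain ⟨hSV, hSm⟩ := mem_powersetCard.1 (hX hSX)
  exact mem_powersetCard.2 ⟨(subset_insert_iff_of_notMem hz).1 hSV, hSm⟩

lemma falling_memberSubfamily_subset {z : α} :
    falling l (memberSubfamily z X) ⊆ memberSubfamily z (falling (l + 1) X) := by
  intro U hU
  obtain ⟨⟨S, hS, hUS⟩, rfl⟩ := mem_falling.1 hU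
  obtain ⟨hzS, hz⟩ := mem_memberSubfamily.1 hS
  have hzU : z ∉ U := fun h => hz (hUS h)
  exact mem_memberSubfamily.2
    ⟨mem_falling.2 ⟨⟨_, hzS, insert_subset_insert z hUS⟩, card_insert_of_notMem hzU⟩, hzU⟩

lemma powersetCard_subset_falling (hX : powersetCard m V ⊆ X) (hlm : l ≤ m) (hm : m ≤ #V) :
    powersetCard l V ⊆ falling l X := by
  intro U hU
  obtain ⟨hUV, rfl⟩ := mem_powersetCard.1 hU
  obtain ⟨S, hUS, hSV, hSm⟩ := exists_subsuperset_card_eq hUV hlm hm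
  exact mem_falling.2 ⟨⟨S, hX (mem_powersetCard.2 ⟨hSV, hSm⟩), hUS⟩, rfl⟩

lemma card_add_choose_le_card_falling_add_choose {z : α} (hz : z ∉ V) (hl : 1 ≤ l) (hlm : l ≤ m)
    (hV : #V = l + m) (hVX : powersetCard (m + 1) V ⊆ X)
    (hX : X ⊆ powersetCard (m + 1) (insert z V)) :
    #X + (l + m).choose (l + 1) ≤ #(falling (l + 1) X) + (l + m).choose (m + 1) := by
  have hmem : #(memberSubfamily z X) ≤ #(memberSubfamily z (falling (l + 1) X)) :=
    (card_le_card_falling (memberSubfamily_subset_powersetCard hX) hlm hV).trans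
      (card_le_card falling_memberSubfamily_subset)
  have hnonX : #(nonMemberSubfamily z X) ≤ (l + m).choose (m + 1) := by
    rw [← hV, ← card_powersetCard]
    exact card_le_card (nonMemberSubfamily_subset_powersetCard hX)
  have hnonfall : (l + m).choose (l + 1) ≤ #(nonMemberSubfamily z (falling (l + 1) X)) := by
    rw [← hV, ← card_powersetCard]
    refine card_le_card fun U hU => mem_nonMemberSubfamily.2 ⟨?_, fun h => ?_⟩
    · exact powersetCard_subset_falling hVX (by omega) (by omega) hU
    · exact hz ((mem_powersetCard.1 hU).1 h)
  have hsplitX := card_memberSubfamily_add_card_nonMemberSubfamily z X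
  have hsplit := card_memberSubfamily_add_card_nonMemberSubfamily z (falling (l + 1) X)
  omega

end Shadows

section InitialSegments

variable {α : Type*} [LinearOrder α] {m : ℕ}

lemma isInitSeg_powersetCard {V : Finset α} (hV : IsLowerSet (V : Set α)) :
    IsInitSeg (powersetCard m V) m := by
  refine ⟨Set.sized_powersetCard V m, fun {A B} hA hB => ?_⟩
  have hAV : A ⊆ V := (mem_powersetCard.1 hA).1
  refine mem_powersetCard.2 ⟨fun x hx => ?_, hB.2⟩
  by_cases hxA : x ∈ A
  · exact hAV hxA
  · obtain ⟨y, hyA, -, hxy⟩ := toColex_le_toColex.1 hB.1.le hx hxA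
    exact hV hxy (hAV hyA)

lemma subset_of_isInitSeg_of_card_le {𝒜 ℬ : Finset (Finset α)} (h𝒜 : IsInitSeg 𝒜 m)
    (hℬ : IsInitSeg ℬ m) (h : #𝒜 ≤ #ℬ) : 𝒜 ⊆ ℬ :=
  (h𝒜.total hℬ).elim id fun h' => (eq_of_subset_of_card_le h' h).ge

lemma exists_isInitSeg_card_eq [Fintype α] {t : ℕ} (ht : t ≤ (Fintype.card α).choose m) :
    ∃ 𝒞 : Finset (Finset α), IsInitSeg 𝒞 m ∧ #𝒞 = t := by
  induction ht using Nat.decreasingInduction with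
  | self =>
    refine ⟨powersetCard m univ, isInitSeg_powersetCard (by simp [isLowerSet_univ]), ?_⟩
    rw [card_powersetCard, card_univ]
  | of_succ t _ ih =>
    obtain ⟨𝒞, h𝒞, hcard⟩ := ih
    obtain ⟨S, hS, hmax⟩ := exists_max_image 𝒞 toColex (card_pos.1 (hcard ▸ t.succ_pos))
    refine ⟨𝒞.erase S, ⟨fun A hA => h𝒞.1 (mem_of_mem_erase hA), fun {A B} hA hB => ?_⟩, ?_⟩
    · have hA' := mem_of_mem_erase hA
      refine mem_erase.2 ⟨?_, h𝒞.2 hA' hB⟩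
      rintro rfl
      exact (hmax A hA').not_gt hB.1
    · rw [card_erase_of_mem hS, hcard, Nat.add_sub_cancel]

end InitialSegments

section KruskalKatona

variable {n l m : ℕ} {X : Finset (Finset (Fin n))}

lemma exists_isInitSeg_card_falling_le (hX : (X : Set (Finset (Fin n))).Sized m) (hlm : l ≤ m) :
    ∃ 𝒞 : Finset (Finset (Fin n)), IsInitSeg 𝒞 m ∧ #𝒞 = #X ∧ #(falling l 𝒞) ≤ #(falling l X) := by
  obtain ⟨𝒞, h𝒞, hcard⟩ := exists_isInitSeg_card_eq (α := Fin n) hX.card_le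
  refine ⟨𝒞, h𝒞, hcard, ?_⟩
  rw [← iterate_shadow_eq_falling h𝒞.1 hlm, ← iterate_shadow_eq_falling hX hlm]
  exact iterated_kk hX hcard.le h𝒞

lemma isLowerSet_filter_val_lt (M : ℕ) :
    IsLowerSet (({x | x.val < M} : Finset (Fin n)) : Set (Fin n)) := by
  intro x y hyx hx
  simp only [coe_filter, mem_univ, true_and, Set.mem_ofPred_eq] at hx ⊢
  exact (Fin.le_def.1 hyx).trans_lt hx

lemma card_filter_val_lt {M : ℕ} (hM : M ≤ n) : #{x : Fin n | x.val < M} = M := by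
  rw [Fin.card_filter_val_lt, min_eq_right hM]

lemma card_le_card_falling_of_card_le_choose (hX : (X : Set (Finset (Fin n))).Sized m)
    (hlm : l ≤ m) (hn : l + m ≤ n) (hcard : #X ≤ (l + m).choose m) : #X ≤ #(falling l X) := by
  obtain ⟨𝒞, h𝒞, h𝒞X, hfall⟩ := exists_isInitSeg_card_falling_le hX hlm
  have hV := card_filter_val_lt hn
  have hsub := subset_of_isInitSeg_of_card_le h𝒞
    (isInitSeg_powersetCard (isLowerSet_filter_val_lt (l + m)))
    (by rw [card_powersetCard, hV, h𝒞X]; exact hcard)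
  exact h𝒞X ▸ (card_le_card_falling hsub hlm hV).trans hfall

lemma card_add_choose_le_card_falling_add_choose_of_card_mem_Icc
    (hX : (X : Set (Finset (Fin n))).Sized (m + 1)) (hl : 1 ≤ l) (hlm : l ≤ m) (hn : l + m < n)
    (hcard : #X ∈ Set.Icc ((l + m).choose (m + 1)) ((l + m + 1).choose (m + 1))) :
    #X + (l + m).choose (l + 1) ≤ #(falling (l + 1) X) + (l + m).choose (m + 1) := by
  obtain ⟨𝒞, h𝒞, h𝒞X, hfall⟩ := exists_isInitSeg_card_falling_le (l := l + 1) hX (by omega)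
  let V : ℕ → Finset (Fin n) := fun M => {x | x.val < M}
  have hV : #(V (l + m)) = l + m := card_filter_val_lt hn.le
  have hseg (M : ℕ) : IsInitSeg (powersetCard (m + 1) (V M)) (m + 1) :=
    isInitSeg_powersetCard (isLowerSet_filter_val_lt M)
  have hlower : powersetCard (m + 1) (V (l + m)) ⊆ 𝒞 :=
    subset_of_isInitSeg_of_card_le (hseg _) h𝒞 (by rw [card_powersetCard, hV, h𝒞X]; exact hcard.1)
  have hupper : 𝒞 ⊆ powersetCard (m + 1) (V (l + m + 1)) :=
    subset_of_isInitSeg_of_card_le h𝒞 (hseg _)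
      (by rw [card_powersetCard, card_filter_val_lt hn, h𝒞X]; exact hcard.2)
  have hinsert : V (l + m + 1) = insert ⟨l + m, hn⟩ (V (l + m)) := by
    ext x
    simp only [V, mem_filter_univ, mem_insert, Fin.ext_iff]
    omega
  have h := card_add_choose_le_card_falling_add_choose (by simp [V]) hl hlm hV hlower
    (hinsert ▸ hupper)
  omega

lemma choose_le_card_falling {k : ℕ} (hX : (X : Set (Finset (Fin n))).Sized m) (hlm : l ≤ m)
    (hmk : m ≤ k) (hkn : k ≤ n) (hcard : k.choose m ≤ #X) : k.choose l ≤ #(falling l X) := by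
  rw [← iterate_shadow_eq_falling hX hlm]
  simpa only [Nat.sub_sub_self hlm] using
    kruskal_katona_lovasz_form (Nat.sub_le m l) hmk hkn hX hcard

end KruskalKatona

section CrossIntersecting

variable {α : Type*} {𝒜 ℬ : Finset (Finset α)}

/-- Cross-intersecting families: no member of `𝒜` is disjoint from a member of `ℬ`. -/
def CrossIntersecting (𝒜 ℬ : Finset (Finset α)) : Prop :=
  ∀ A ∈ 𝒜, ∀ B ∈ ℬ, ¬Disjoint A B

lemma CrossIntersecting.symm (h : CrossIntersecting 𝒜 ℬ) : CrossIntersecting ℬ 𝒜 :=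
  fun B hB A hA hBA => h A hA B hB hBA.symm

end CrossIntersecting

section Avoiders

variable {α : Type*} [DecidableEq α] {W : Finset α} {𝒜 ℬ : Finset (Finset α)} {a b : ℕ}

/-- The `b`-element subsets of `W` that are disjoint from some member of `𝒜`; a family of
`b`-subsets of `W` cross-intersects `𝒜` exactly when it misses all of them. -/
def avoiders (W : Finset α) (b : ℕ) (𝒜 : Finset (Finset α)) : Finset (Finset α) :=
  {B ∈ powersetCard b W | ∃ A ∈ 𝒜, Disjoint A B}

lemma CrossIntersecting.card_add_card_avoiders_le (h : CrossIntersecting 𝒜 ℬ)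
    (hℬ : ℬ ⊆ powersetCard b W) : #ℬ + #(avoiders W b 𝒜) ≤ (#W).choose b := by
  have hdisj : Disjoint ℬ (avoiders W b 𝒜) := by
    rw [Finset.disjoint_left]
    intro B hB hBav
    obtain ⟨-, A, hA, hAB⟩ := mem_filter.1 hBav
    exact h A hA B hB hAB
  rw [← card_union_of_disjoint hdisj, ← card_powersetCard]
  exact card_le_card (union_subset hℬ (filter_subset _ _))

lemma avoiders_eq_falling_image_sdiff : avoiders W b 𝒜 = falling b (𝒜.image (W \ ·)) := by
  ext B
  simp only [avoiders, mem_filter, mem_powersetCard, mem_falling, exists_mem_image, subset_sdiff,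
    disjoint_comm]
  constructor
  · rintro ⟨⟨hBW, hBb⟩, A, hA, hAB⟩
    exact ⟨⟨A, hA, hBW, hAB⟩, hBb⟩
  · rintro ⟨⟨A, hA, hBW, hAB⟩, hBb⟩
    exact ⟨⟨hBW, hBb⟩, A, hA, hAB⟩

lemma image_sdiff_subset_powersetCard (h𝒜 : 𝒜 ⊆ powersetCard a W) :
    𝒜.image (W \ ·) ⊆ powersetCard (#W - a) W := by
  refine image_subset_iff.2 fun A hA => ?_
  obtain ⟨hAW, rfl⟩ := mem_powersetCard.1 (h𝒜 hA)
  exact mem_powersetCard.2 ⟨sdiff_subset, card_sdiff_of_subset hAW⟩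

lemma sized_image_sdiff {m : ℕ} (h𝒜 : 𝒜 ⊆ powersetCard a W) (hW : #W = a + m) :
    (𝒜.image (W \ ·) : Set (Finset α)).Sized m := by
  intro A hA
  rw [(mem_powersetCard.1 (image_sdiff_subset_powersetCard h𝒜 (mod_cast hA))).2, hW,
    Nat.add_sub_cancel_left]

lemma card_image_sdiff (h𝒜 : 𝒜 ⊆ powersetCard a W) : #(𝒜.image (W \ ·)) = #𝒜 := by
  refine card_image_of_injOn fun A hA A' hA' h => ?_
  rw [← Finset.sdiff_sdiff_eq_self (mem_powersetCard.1 (h𝒜 hA)).1,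
    ← Finset.sdiff_sdiff_eq_self (mem_powersetCard.1 (h𝒜 hA')).1]
  exact congrArg (W \ ·) h

lemma card_mul_choose_le_card_avoiders_mul_choose (h𝒜 : 𝒜 ⊆ powersetCard a W)
    (hab : a + b ≤ #W) : #𝒜 * (#W).choose b ≤ #(avoiders W b 𝒜) * (#W).choose a := by
  rw [avoiders_eq_falling_image_sdiff, ← card_image_sdiff h𝒜,
    ← Nat.choose_symm (show a ≤ #W by omega)]
  exact card_mul_choose_le_card_falling_mul_choose (image_sdiff_subset_powersetCard h𝒜) (by omega)

end Avoiders

section AvoidersKruskalKatona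

variable {n a b : ℕ} {W : Finset (Fin n)} {𝒜 : Finset (Finset (Fin n))}

lemma card_le_card_avoiders {m : ℕ} (h𝒜 : 𝒜 ⊆ powersetCard a W) (hW : #W = a + m)
    (hbm : b ≤ m) (hba : b ≤ a) (hcard : #𝒜 ≤ (b + m).choose b) :
    #𝒜 ≤ #(avoiders W b 𝒜) := by
  have hWn : #W ≤ n := card_finset_fin_le W
  rw [avoiders_eq_falling_image_sdiff, ← card_image_sdiff h𝒜]
  refine card_le_card_falling_of_card_le_choose (m := m) ?_ hbm (by omega) ?_
  · exact sized_image_sdiff h𝒜 hW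
  · rw [card_image_sdiff h𝒜, ← Nat.choose_symm_add]
    exact hcard

lemma card_add_choose_le_card_avoiders_add_choose {c r : ℕ} (hr : 2 * c + 2 ≤ r)
    (h𝒜 : 𝒜 ⊆ powersetCard a W) (hca : c + 2 ≤ a) (hW : #W + c = a + r)
    (hcard : #𝒜 ∈ Set.Icc (r.choose c) ((r + 1).choose (c + 1))) :
    #𝒜 + r.choose (c + 2) ≤ #(avoiders W (c + 2) 𝒜) + r.choose c := by
  have hWn : #W ≤ n := card_finset_fin_le W
  obtain ⟨m, rfl⟩ : ∃ m, r = c + 1 + m := ⟨r - c - 1, by omega⟩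
  have hsymm : (c + 1 + m).choose (m + 1) = (c + 1 + m).choose c :=
    Nat.choose_symm_of_eq_add (by omega)
  have hsymm' : (c + 1 + m + 1).choose (m + 1) = (c + 1 + m + 1).choose (c + 1) :=
    Nat.choose_symm_of_eq_add (by omega)
  rw [← hsymm, ← hsymm', ← card_image_sdiff h𝒜] at hcard
  rw [avoiders_eq_falling_image_sdiff, ← hsymm, ← card_image_sdiff h𝒜]
  exact card_add_choose_le_card_falling_add_choose_of_card_mem_Icc
    (sized_image_sdiff h𝒜 (by omega)) (by omega) (by omega) (by omega) hcard

lemma choose_le_card_avoiders {k m : ℕ} (h𝒜 : 𝒜 ⊆ powersetCard a W) (hW : #W = a + m)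
    (hbm : b ≤ m) (hmk : m ≤ k) (hk : k ≤ #W) (hcard : k.choose m ≤ #𝒜) :
    k.choose b ≤ #(avoiders W b 𝒜) := by
  have hWn : #W ≤ n := card_finset_fin_le W
  rw [avoiders_eq_falling_image_sdiff]
  refine choose_le_card_falling (m := m) ?_ hbm hmk (hk.trans hWn)
    (by rwa [card_image_sdiff h𝒜])
  exact sized_image_sdiff h𝒜 hW

end AvoidersKruskalKatona

section Shifted

variable {α : Type*} [LinearOrder α] {w : α} {W : Finset α} {𝒜 : Finset (Finset α)} {a b c t : ℕ}

/-- Shifted (left-compressed) families on `W`: replacing an element of a member of `𝒜` by a smaller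
element of `W` yields a member of `𝒜`. -/
def IsShiftedOn (W : Finset α) (𝒜 : Finset (Finset α)) : Prop :=
  ∀ A ∈ 𝒜, ∀ i ∈ W, ∀ j ∈ A, i < j → i ∉ A → insert i (A.erase j) ∈ 𝒜

/-- `t`-intersecting families: any two members, equal or not, share at least `t` elements. -/
def TIntersecting (t : ℕ) (𝒜 : Finset (Finset α)) : Prop :=
  ∀ A ∈ 𝒜, ∀ B ∈ 𝒜, t ≤ #(A ∩ B)

lemma TIntersecting.eq_empty_of_card_lt (h : TIntersecting t 𝒜) (h𝒜 : 𝒜 ⊆ powersetCard a W)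
    (hat : a < t) : 𝒜 = ∅ := by
  refine eq_empty_of_forall_notMem fun A hA => ?_
  have hAA := h A hA A hA
  rw [inter_self, (mem_powersetCard.1 (h𝒜 hA)).2] at hAA
  omega

lemma IsShiftedOn.memberSubfamily (h : IsShiftedOn (insert w W) 𝒜) (hw : w ∉ W) :
    IsShiftedOn W (memberSubfamily w 𝒜) := by
  intro A hA i hi j hj hij hiA
  obtain ⟨hwA𝒜, hwA⟩ := mem_memberSubfamily.1 hA
  have hiw : i ≠ w := fun h => hw (h ▸ hi)
  have hjw : j ≠ w := fun h => hwA (h ▸ hj)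
  have hshift := h _ hwA𝒜 i (mem_insert_of_mem hi) j (mem_insert_of_mem hj) hij
    (by simp [hiw, hiA])
  rw [erase_insert_of_ne hjw.symm, insert_comm] at hshift
  exact mem_memberSubfamily.2 ⟨hshift, by simp [hiw.symm, hwA]⟩

lemma IsShiftedOn.nonMemberSubfamily (h : IsShiftedOn (insert w W) 𝒜) (hw : w ∉ W) :
    IsShiftedOn W (nonMemberSubfamily w 𝒜) := by
  intro A hA i hi j hj hij hiA
  obtain ⟨hA𝒜, hwA⟩ := mem_nonMemberSubfamily.1 hA
  have hiw : i ≠ w := fun h => hw (h ▸ hi)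
  exact mem_nonMemberSubfamily.2
    ⟨h A hA𝒜 i (mem_insert_of_mem hi) j hj hij hiA, by simp [hiw.symm, hwA]⟩

lemma TIntersecting.memberSubfamily (h : TIntersecting (t + 1) 𝒜) :
    TIntersecting t (memberSubfamily w 𝒜) := by
  intro A hA B hB
  obtain ⟨hwA𝒜, hwA⟩ := mem_memberSubfamily.1 hA
  have hAB := h _ hwA𝒜 _ (mem_memberSubfamily.1 hB).1
  rw [← insert_inter_distrib, card_insert_of_notMem fun h => hwA (mem_inter.1 h).1] at hAB
  exact Nat.le_of_succ_le_succ hAB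

-- Shifting a common element of `A` and `B` to `w` in `A` alone makes the intersection smaller.
lemma TIntersecting.nonMemberSubfamily (ht : TIntersecting (t + 1) 𝒜)
    (h : IsShiftedOn (insert w W) 𝒜) (hw : ∀ x ∈ W, w < x) (h𝒜 : 𝒜 ⊆ powersetCard a (insert w W)) :
    TIntersecting (t + 2) (nonMemberSubfamily w 𝒜) := by
  intro A hA B hB
  obtain ⟨hA𝒜, hwA⟩ := mem_nonMemberSubfamily.1 hA
  obtain ⟨hB𝒜, hwB⟩ := mem_nonMemberSubfamily.1 hB
  obtain ⟨x, hx⟩ := card_pos.1 (Nat.succ_pos t |>.trans_le (ht A hA𝒜 B hB𝒜))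
  have hxA := (mem_inter.1 hx).1
  have hwx : w < x :=
    hw x ((mem_powersetCard.1 (nonMemberSubfamily_subset_powersetCard h𝒜 hA)).1 hxA)
  have hAB := ht _ (h A hA𝒜 w (mem_insert_self w W) x hxA hwx hwA) B hB𝒜
  rw [insert_inter_of_notMem hwB, erase_inter, card_erase_of_mem hx] at hAB
  omega

lemma avoiders_memberSubfamily_subset (hw : w ∉ W) :
    avoiders W b (memberSubfamily w 𝒜) ⊆ nonMemberSubfamily w (avoiders (insert w W) b 𝒜) := by
  intro B hB
  simp only [avoiders, mem_filter, mem_powersetCard, mem_memberSubfamily] at hB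
  obtain ⟨⟨hBW, hBb⟩, A, ⟨hwA𝒜, -⟩, hAB⟩ := hB
  have hwB : w ∉ B := fun h => hw (hBW h)
  simp only [avoiders, mem_filter, mem_powersetCard, mem_nonMemberSubfamily]
  exact ⟨⟨⟨hBW.trans (subset_insert w W), hBb⟩, _, hwA𝒜, disjoint_insert_left.2 ⟨hwB, hAB⟩⟩, hwB⟩

lemma avoiders_nonMemberSubfamily_subset (hw : w ∉ W) :
    avoiders W b (nonMemberSubfamily w 𝒜) ⊆
      memberSubfamily w (avoiders (insert w W) (b + 1) 𝒜) := by
  intro B hB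
  simp only [avoiders, mem_filter, mem_powersetCard, mem_nonMemberSubfamily] at hB
  obtain ⟨⟨hBW, rfl⟩, A, ⟨hA𝒜, hwA⟩, hAB⟩ := hB
  have hwB : w ∉ B := fun h => hw (hBW h)
  simp only [avoiders, mem_filter, mem_powersetCard, mem_memberSubfamily]
  exact ⟨⟨⟨insert_subset_insert w hBW, card_insert_of_notMem hwB⟩, A, hA𝒜,
    disjoint_insert_right.2 ⟨hwA, hAB⟩⟩, hwB⟩

end Shifted

section Katona

lemma choose_add_two_mul_choose_le {b c M : ℕ} (hcb : c ≤ b) (hM : c + b ≤ M) :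
    (M + 2).choose (b + 1) * M.choose c ≤ M.choose b * (M + 2).choose (c + 1) := by
  have habsorb (d : ℕ) : (M + 2).choose (d + 1) * ((d + 1) * (M + 1 - d)) =
      (M + 2) * (M + 1) * M.choose d := by
    rw [← mul_assoc, ← Nat.add_one_mul_choose_eq, mul_assoc, ← Nat.choose_mul_succ_eq]
    ring
  have hmono : (c + 1) * (M + 1 - c) ≤ (b + 1) * (M + 1 - b) := by
    obtain ⟨p, rfl⟩ := Nat.exists_eq_add_of_le hcb
    obtain ⟨q, rfl⟩ := Nat.exists_eq_add_of_le hM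
    rw [show c + (c + p) + q + 1 - c = c + p + q + 1 by omega,
      show c + (c + p) + q + 1 - (c + p) = c + q + 1 by omega]
    nlinarith
  refine Nat.le_of_mul_le_mul_left ?_ (show 0 < (M + 2) * (M + 1) by positivity)
  calc (M + 2) * (M + 1) * ((M + 2).choose (b + 1) * M.choose c)
      = (M + 2).choose (b + 1) * (M + 2).choose (c + 1) * ((c + 1) * (M + 1 - c)) := by
        rw [mul_assoc _ _ ((c + 1) * _), habsorb c]; ring
    _ ≤ (M + 2).choose (b + 1) * (M + 2).choose (c + 1) * ((b + 1) * (M + 1 - b)) := by gcongr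
    _ = (M + 2) * (M + 1) * (M.choose b * (M + 2).choose (c + 1)) := by
        rw [mul_right_comm, habsorb b]; ring

lemma mul_choose_le_of_mul_choose_le {b c M x y : ℕ} (hcb : c ≤ b) (hM : c + b ≤ M)
    (h : x * M.choose b ≤ y * M.choose c) :
    x * (M + 2).choose (b + 1) ≤ y * (M + 2).choose (c + 1) := by
  refine Nat.le_of_mul_le_mul_right ?_ (show 0 < M.choose c from Nat.choose_pos (by omega))
  calc x * (M + 2).choose (b + 1) * M.choose c
      ≤ x * M.choose b * (M + 2).choose (c + 1) := by
        rw [mul_assoc, mul_assoc]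
        exact Nat.mul_le_mul_left _ (choose_add_two_mul_choose_le hcb hM)
    _ ≤ y * M.choose c * (M + 2).choose (c + 1) := Nat.mul_le_mul_right _ h
    _ = y * (M + 2).choose (c + 1) * M.choose c := mul_right_comm _ _ _

variable {α : Type*} [LinearOrder α]

-- Removing the least point `w` of the ground set lowers `t` by one for the sets through `w` and
-- raises it by one for the sets avoiding `w`; the induction stops at `t = 0`.
theorem card_mul_choose_le_card_avoiders_mul_choose_of_isShiftedOn {W : Finset α}
    {𝒜 : Finset (Finset α)} {b c t M : ℕ} (h𝒜 : 𝒜 ⊆ powersetCard (c + t) W)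
    (hshift : IsShiftedOn W 𝒜) (ht : TIntersecting t 𝒜) (hcb : c ≤ b) (hM : c + b ≤ M)
    (hW : #W = M + t) : #𝒜 * M.choose b ≤ #(avoiders W b 𝒜) * M.choose c := by
  induction W using Finset.induction_on_min generalizing 𝒜 b c t M with
  | empty =>
    obtain ⟨rfl, rfl⟩ : M = 0 ∧ t = 0 := by simpa [eq_comm] using hW
    exact card_mul_choose_le_card_avoiders_mul_choose h𝒜 (by simpa using hM)
  | insert w W hw ih =>
    have hwW : w ∉ W := fun h => (hw w h).false
    obtain _ | t := t
    · obtain rfl : #(insert w W) = M := hW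
      exact card_mul_choose_le_card_avoiders_mul_choose h𝒜 hM
    have hW' : #W = M + t := by
      rw [card_insert_of_notMem hwW] at hW
      omega
    have hmem : #(memberSubfamily w 𝒜) * M.choose b ≤
        #(nonMemberSubfamily w (avoiders (insert w W) b 𝒜)) * M.choose c :=
      (ih (memberSubfamily_subset_powersetCard h𝒜) (hshift.memberSubfamily hwW)
        ht.memberSubfamily hcb hM hW').trans
        (Nat.mul_le_mul_right _ (card_le_card (avoiders_memberSubfamily_subset hwW)))
    have hnon : #(nonMemberSubfamily w 𝒜) * M.choose b ≤
        #(memberSubfamily w (avoiders (insert w W) b 𝒜)) * M.choose c := by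
      have ht' := ht.nonMemberSubfamily hshift hw h𝒜
      obtain _ | c := c
      · rw [ht'.eq_empty_of_card_lt (nonMemberSubfamily_subset_powersetCard h𝒜) (by omega)]
        simp
      obtain ⟨b, rfl⟩ : ∃ b', b = b' + 1 := ⟨b - 1, by omega⟩
      obtain ⟨M, rfl⟩ : ∃ M', M = M' + 2 := ⟨M - 2, by omega⟩
      have hrec := ih (c := c) (t := t + 2)
        (by simpa only [show c + 1 + (t + 1) = c + (t + 2) by ring] using
          nonMemberSubfamily_subset_powersetCard h𝒜)
        (hshift.nonMemberSubfamily hwW) ht' (show c ≤ b by omega) (show c + b ≤ M by omega)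
        (by omega)
      have hav := card_le_card (avoiders_nonMemberSubfamily_subset (b := b) (𝒜 := 𝒜) hwW)
      exact (mul_choose_le_of_mul_choose_le (by omega) (by omega) hrec).trans (by gcongr)
    rw [← card_memberSubfamily_add_card_nonMemberSubfamily w 𝒜,
      ← card_memberSubfamily_add_card_nonMemberSubfamily w (avoiders _ _ _)]
    linarith

end Katona

section Subfamilies

variable {α : Type*} [DecidableEq α] {F : Finset (Finset α)} {W : Finset α} {i j x : α} {k : ℕ}

lemma memberSubfamily_nonMemberSubfamily_comm (hij : i ≠ j) :
    memberSubfamily i (nonMemberSubfamily j F) = nonMemberSubfamily j (memberSubfamily i F) := by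
  ext A
  simp only [mem_memberSubfamily, mem_nonMemberSubfamily, mem_insert, hij.symm, false_or]
  tauto

lemma nonMemberSubfamily_comm :
    nonMemberSubfamily i (nonMemberSubfamily j F) =
      nonMemberSubfamily j (nonMemberSubfamily i F) := by
  ext A
  simp only [mem_nonMemberSubfamily]
  tauto

lemma crossIntersecting_nonMemberSubfamily_memberSubfamily
    (hF : (F : Set (Finset α)).Intersecting) :
    CrossIntersecting (nonMemberSubfamily x F) (memberSubfamily x F) := by
  intro A hA B hB hAB
  obtain ⟨hAF, hxA⟩ := mem_nonMemberSubfamily.1 hA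
  exact hF hAF (mem_memberSubfamily.1 hB).1 (disjoint_insert_right.2 ⟨hxA, hAB⟩)

lemma card_memberSubfamily_add_card_avoiders_le (hF : (F : Set (Finset α)).Intersecting)
    (hFW : F ⊆ powersetCard (k + 1) (insert x W)) :
    #(memberSubfamily x F) + #(avoiders W k (nonMemberSubfamily x F)) ≤ (#W).choose k :=
  (crossIntersecting_nonMemberSubfamily_memberSubfamily hF).card_add_card_avoiders_le
    (memberSubfamily_subset_powersetCard hFW)

lemma crossIntersecting_nonMemberSubfamily_nonMemberSubfamily
    (hF : (F : Set (Finset α)).Intersecting) :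
    CrossIntersecting (nonMemberSubfamily j (nonMemberSubfamily i F))
      (memberSubfamily j (memberSubfamily i F)) := by
  intro A hA B hB hAB
  simp only [mem_nonMemberSubfamily, mem_memberSubfamily] at hA hB
  exact hF hA.1.1 hB.1.1
    (disjoint_insert_right.2 ⟨hA.1.2, disjoint_insert_right.2 ⟨hA.2, hAB⟩⟩)

lemma crossIntersecting_nonMemberSubfamily_memberSubfamily_of_ne (hij : i ≠ j)
    (hF : (F : Set (Finset α)).Intersecting) :
    CrossIntersecting (nonMemberSubfamily j (memberSubfamily i F))
      (memberSubfamily j (nonMemberSubfamily i F)) := by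
  intro A hA B hB hAB
  simp only [mem_nonMemberSubfamily, mem_memberSubfamily, mem_insert, not_or] at hA hB
  refine hF hA.1.1 hB.1.1 ?_
  simp only [disjoint_insert_left, disjoint_insert_right, mem_insert, not_or]
  exact ⟨⟨hij.symm, hA.2⟩, hB.1.2.2, hAB⟩

end Subfamilies

section Binomials

variable {c r : ℕ}

lemma choose_le_choose_succ {a k : ℕ} (h : 2 * k + 1 ≤ a) : a.choose k ≤ a.choose (k + 1) := by
  refine Nat.le_of_mul_le_mul_right ?_ k.succ_pos
  rw [Nat.choose_succ_right_eq]
  exact Nat.mul_le_mul_left _ (by omega)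

lemma choose_add_three_choose_add_two :
    (r + 3).choose (c + 2) + r.choose c =
      (r + 2).choose (c + 1) + 2 * (r + 1).choose (c + 1) + r.choose (c + 2) := by
  simp only [Nat.choose_succ_succ']
  ring

lemma add_le_add_of_mul_le_mul {x y u v : ℕ} (hvx : v ≤ x) (hvu : v ≤ u) (hv : 0 < v)
    (h : x * u ≤ y * v) : x + u ≤ y + v := by
  by_contra! hlt
  obtain ⟨p, rfl⟩ := Nat.exists_eq_add_of_le hvx
  obtain ⟨q, rfl⟩ := Nat.exists_eq_add_of_le hvu
  have hy : y * v < (v + p + q) * v := Nat.mul_lt_mul_of_pos_right (by omega) hv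
  nlinarith

end Binomials

section Extremal

variable {c n r : ℕ} {W : Finset (Fin n)} {P Q R T : Finset (Finset (Fin n))}

lemma card_add_card_le_of_crossIntersecting (hr : 2 * c + 2 ≤ r) (hW : #W = r + 2)
    (hT : T ⊆ powersetCard (c + 3) W) (hR : R ⊆ powersetCard (c + 1) W)
    (hTR : CrossIntersecting T R) (hcard : #T ≤ r.choose (c + 1)) :
    #R + #T ≤ (r + 2).choose (c + 1) := by
  have hT_le : #T ≤ #(avoiders W (c + 1) T) :=
    card_le_card_avoiders (m := r - c - 1) hT (by omega) (by omega) (by omega)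
      (by rwa [show c + 1 + (r - c - 1) = r by omega])
  have hRT := hTR.card_add_card_avoiders_le hR
  rw [hW] at hRT
  omega

lemma card_add_card_le_two_mul_choose (hr : 2 * c + 2 ≤ r) (hW : #W = r + 2)
    (hP : P ⊆ powersetCard (c + 2) W) (hQ : Q ⊆ powersetCard (c + 2) W)
    (hPQ : CrossIntersecting P Q) (hP_ge : r.choose c ≤ #P) (hQ_ge : r.choose c ≤ #Q) :
    #P + #Q ≤ 2 * (r + 1).choose (c + 1) := by
  wlog hle : #P ≤ #Q generalizing P Q
  · rw [add_comm]
    exact this hQ hP hPQ.symm hQ_ge hP_ge (Nat.le_of_not_le hle)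
  have hcross := hPQ.card_add_card_avoiders_le hQ
  rw [hW] at hcross
  have hpascal : (r + 2).choose (c + 2) = (r + 1).choose (c + 1) + (r + 1).choose (c + 2) :=
    Nat.choose_succ_succ' _ _
  rcases le_total (#P) ((r + 1).choose (c + 1)) with hP_le | hP_le
  · have hav := card_add_choose_le_card_avoiders_add_choose hr hP (by omega) (by omega)
      ⟨hP_ge, hP_le⟩
    have hpascal₁ : (r + 1).choose (c + 1) = r.choose c + r.choose (c + 1) :=
      Nat.choose_succ_succ' _ _
    have hpascal₂ : (r + 1).choose (c + 2) = r.choose (c + 1) + r.choose (c + 2) :=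
      Nat.choose_succ_succ' _ _
    omega
  · have hav : (r + 1).choose (c + 2) ≤ #(avoiders W (c + 2) P) :=
      choose_le_card_avoiders (m := r - c) hP (by omega) (by omega) (by omega) (by omega)
        (by rwa [Nat.choose_symm_of_eq_add (show r + 1 = r - c + (c + 1) by omega)])
    omega

end Extremal

section Compression

variable {α : Type*} [DecidableEq α] {F : Finset (Finset α)} {A : Finset α} {i j x : α}

lemma sum_compression_lt {u v : Finset α} (f : Finset α → ℕ)
    (hf : ∀ A ∈ F, UV.compress u v A ≠ A → f (UV.compress u v A) < f A)
    (h : ¬UV.IsCompressed u v F) : ∑ A ∈ 𝓒 u v F, f A < ∑ A ∈ F, f A := by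
  have hmoved : {A ∈ F | UV.compress u v A ∉ F}.Nonempty := by
    contrapose! h
    have hfix := filter_union_filter_not_eq (fun A => UV.compress u v A ∈ F) F
    rw [h, union_empty] at hfix
    rw [UV.IsCompressed, UV.compression, filter_image, h, image_empty, union_empty, hfix]
  calc ∑ A ∈ 𝓒 u v F, f A
      = ∑ A ∈ F with UV.compress u v A ∈ F, f A +
          ∑ A ∈ F with UV.compress u v A ∉ F, f (UV.compress u v A) := by
        rw [UV.compression, sum_union UV.compress_disjoint, filter_image,
          sum_image UV.compress_injOn]
    _ < ∑ A ∈ F with UV.compress u v A ∈ F, f A + ∑ A ∈ F with UV.compress u v A ∉ F, f A := by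
        gcongr with A hA
        obtain ⟨hAF, hA'⟩ := mem_filter.1 hA
        exact hf A hAF fun hfix => hA' (hfix.symm ▸ hAF)
    _ = ∑ A ∈ F, f A := sum_filter_add_sum_filter_not _ _ _

lemma compress_singleton (hij : i ≠ j) :
    UV.compress {i} {j} A = if i ∉ A ∧ j ∈ A then insert i (A.erase j) else A := by
  simp only [UV.compress, disjoint_singleton_left, singleton_subset_iff, sup_eq_union]
  congr 1
  rw [union_comm, ← insert_eq, sdiff_singleton_eq_erase, erase_insert_of_ne hij]

lemma mem_compression_singleton (hij : i ≠ j) :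
    A ∈ 𝓒 {i} {j} F ↔ A ∈ F ∧ (i ∉ A → j ∈ A → insert i (A.erase j) ∈ F) ∨
      A ∉ F ∧ i ∈ A ∧ j ∉ A ∧ insert j (A.erase i) ∈ F := by
  rw [UV.mem_compression]
  refine or_congr (and_congr_right fun hA => ?_) (and_congr_right fun hA => ⟨?_, ?_⟩)
  · rw [compress_singleton hij]
    grind
  · rintro ⟨B, hB, rfl⟩
    rw [compress_singleton hij] at hA ⊢
    split_ifs at hA ⊢ with h
    · have : insert j ((insert i (B.erase j)).erase i) = B := by grind
      grind
    · exact absurd hB hA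
  · rintro ⟨hi, hj, hB⟩
    refine ⟨_, hB, ?_⟩
    rw [compress_singleton hij]
    grind

lemma intersecting_compression_singleton (hij : i ≠ j) (hF : (F : Set (Finset α)).Intersecting) :
    (𝓒 {i} {j} F : Set (Finset α)).Intersecting := by
  have hmixed {A B : Finset α} (hA : A ∈ F) (hshift : i ∉ A → j ∈ A → insert i (A.erase j) ∈ F)
      (hiB : i ∈ B) (hB : insert j (B.erase i) ∈ F) : ¬Disjoint A B := by
    intro hAB
    have hiA : i ∉ A := fun h => disjoint_left.1 hAB h hiB
    have hjA : j ∈ A := by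
      by_contra hjA
      exact hF hA hB (disjoint_insert_right.2 ⟨hjA, hAB.mono_right (erase_subset i B)⟩)
    refine hF (hshift hiA hjA) hB ?_
    grind [Finset.disjoint_left]
  intro A hA B hB
  rw [mem_coe, mem_compression_singleton hij] at hA hB
  obtain ⟨hA, hshiftA⟩ | ⟨-, hiA, -, hA⟩ := hA <;> obtain ⟨hB, hshiftB⟩ | ⟨-, hiB, -, hB⟩ := hB
  · exact hF hA hB
  · exact hmixed hA hshiftA hiB hB
  · exact fun h => hmixed hB hshiftB hiA hA h.symm
  · exact not_disjoint_iff.2 ⟨i, hiA, hiB⟩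

lemma compression_nonMemberSubfamily_subset (hij : i ≠ j) (hx : x ≠ i) :
    𝓒 {i} {j} (nonMemberSubfamily x F) ⊆ nonMemberSubfamily x (𝓒 {i} {j} F) := by
  intro A hA
  simp only [mem_compression_singleton hij, mem_nonMemberSubfamily, mem_insert, mem_erase] at hA ⊢
  grind

lemma card_nonMemberSubfamily_le_card_nonMemberSubfamily_compression (hij : i ≠ j) (hx : x ≠ i) :
    #(nonMemberSubfamily x F) ≤ #(nonMemberSubfamily x (𝓒 {i} {j} F)) := by
  rw [← UV.card_compression {i} {j} (nonMemberSubfamily x F)]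
  exact card_le_card (compression_nonMemberSubfamily_subset hij hx)

lemma nonMemberSubfamily_nonMemberSubfamily_subset_compression (hij : i ≠ j) :
    nonMemberSubfamily j (nonMemberSubfamily i F) ⊆ nonMemberSubfamily i (𝓒 {i} {j} F) := by
  intro A hA
  obtain ⟨hAi, hj⟩ := mem_nonMemberSubfamily.1 hA
  obtain ⟨hAF, hi⟩ := mem_nonMemberSubfamily.1 hAi
  exact mem_nonMemberSubfamily.2
    ⟨(mem_compression_singleton hij).2 (.inl ⟨hAF, fun _ h => absurd h hj⟩), hi⟩

end Compression

section CompressionOrder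

variable {n : ℕ} {F : Finset (Finset (Fin n))} {i j : Fin n}

lemma isShiftedOn_univ_of_isCompressed {α : Type*} [LinearOrder α] [Fintype α]
    {F : Finset (Finset α)} (h : ∀ i j, i < j → UV.IsCompressed {i} {j} F) :
    IsShiftedOn univ F := by
  intro A hA i _ j hjA hij hiA
  rw [← (h i j hij).eq, mem_compression_singleton hij.ne] at hA
  obtain ⟨-, hshift⟩ | ⟨-, hiA', -⟩ := hA
  · exact hshift hiA hjA
  · exact absurd hiA' hiA

lemma sum_sum_compression_lt (hij : i < j) (h : ¬UV.IsCompressed {i} {j} F) :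
    ∑ A ∈ 𝓒 {i} {j} F, ∑ x ∈ A, x.val < ∑ A ∈ F, ∑ x ∈ A, x.val := by
  refine sum_compression_lt (fun A => ∑ x ∈ A, x.val) (fun A _ hA => ?_) h
  rw [compress_singleton hij.ne] at hA ⊢
  split_ifs at hA ⊢ with hmem
  · rw [sum_insert (fun hi => hmem.1 (mem_of_mem_erase hi)), ← add_sum_erase A _ hmem.2]
    gcongr
    exact hij
  · exact absurd rfl hA

end CompressionOrder

section SizeBounds

variable {c n r : ℕ} {F : Finset (Finset (Fin n))} {W : Finset (Fin n)} {i j x : Fin n}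

lemma card_le_of_card_nonMemberSubfamily_mem_Icc (hr : 2 * c + 2 ≤ r)
    (hint : (F : Set (Finset (Fin n))).Intersecting) (hF : F ⊆ powersetCard (c + 3) (insert x W))
    (hW : #W = r + 3)
    (hx : #(nonMemberSubfamily x F) ∈ Set.Icc (r.choose c) ((r + 1).choose (c + 1))) :
    #F ≤ (r + 2).choose (c + 1) + 2 * (r + 1).choose (c + 1) := by
  have hav := card_add_choose_le_card_avoiders_add_choose hr
    (nonMemberSubfamily_subset_powersetCard hF) (by omega) (by omega) hx
  have hcross := card_memberSubfamily_add_card_avoiders_le hint hF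
  rw [hW] at hcross
  have hpascal := choose_add_three_choose_add_two (c := c) (r := r)
  have hsplit := card_memberSubfamily_add_card_nonMemberSubfamily x F
  omega

lemma card_le_of_isShiftedOn (hr : 2 * c + 2 ≤ r)
    (hint : (F : Set (Finset (Fin n))).Intersecting) (hF : F ⊆ powersetCard (c + 3) (insert x W))
    (hW : #W = r + 3) (hxW : ∀ y ∈ W, x < y) (hshift : IsShiftedOn (insert x W) F)
    (hx : (r + 1).choose (c + 1) ≤ #(nonMemberSubfamily x F)) :
    #F ≤ (r + 2).choose (c + 1) + 2 * (r + 1).choose (c + 1) := by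
  have hone : TIntersecting 1 F := fun A hA B hB =>
    card_pos.2 (not_disjoint_iff_nonempty_inter.1 (hint hA hB))
  have hkatona := card_mul_choose_le_card_avoiders_mul_choose_of_isShiftedOn (c := c + 1)
    (b := c + 2) (nonMemberSubfamily_subset_powersetCard hF)
    (hshift.nonMemberSubfamily fun h => (hxW x h).false)
    (hone.nonMemberSubfamily hshift hxW hF) (by omega) (show c + 1 + (c + 2) ≤ r + 1 by omega) hW
  have hav : #(nonMemberSubfamily x F) + (r + 1).choose (c + 2) ≤
      #(avoiders W (c + 2) (nonMemberSubfamily x F)) + (r + 1).choose (c + 1) :=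
    add_le_add_of_mul_le_mul hx (choose_le_choose_succ (by omega)) (Nat.choose_pos (by omega))
      hkatona
  have hcross := card_memberSubfamily_add_card_avoiders_le hint hF
  rw [hW] at hcross
  have hpascal₁ : (r + 3).choose (c + 2) = (r + 2).choose (c + 1) + (r + 2).choose (c + 2) :=
    Nat.choose_succ_succ' _ _
  have hpascal₂ : (r + 2).choose (c + 2) = (r + 1).choose (c + 1) + (r + 1).choose (c + 2) :=
    Nat.choose_succ_succ' _ _
  have hsplit := card_memberSubfamily_add_card_nonMemberSubfamily x F
  omega

-- Split `F` by its trace on `{i, j}`: the traces `∅`, `{i, j}` and the traces `{i}`, `{j}` form two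
-- cross-intersecting pairs on `W`.
lemma card_le_of_card_nonMemberSubfamily_nonMemberSubfamily_le (hr : 2 * c + 2 ≤ r)
    (hint : (F : Set (Finset (Fin n))).Intersecting)
    (hF : F ⊆ powersetCard (c + 3) (insert i (insert j W))) (hW : #W = r + 2) (hij : i ≠ j)
    (hij_le : #(nonMemberSubfamily j (nonMemberSubfamily i F)) ≤ r.choose c)
    (hi : (r + 1).choose (c + 1) ≤ #(nonMemberSubfamily i F))
    (hj : (r + 1).choose (c + 1) ≤ #(nonMemberSubfamily j F)) :
    #F ≤ (r + 2).choose (c + 1) + 2 * (r + 1).choose (c + 1) := by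
  have hmem := memberSubfamily_subset_powersetCard hF
  have hnon := nonMemberSubfamily_subset_powersetCard hF
  have hpascal : (r + 1).choose (c + 1) = r.choose c + r.choose (c + 1) :=
    Nat.choose_succ_succ' _ _
  have hmono : r.choose c ≤ r.choose (c + 1) := choose_le_choose_succ (by omega)
  have hsplit := card_memberSubfamily_add_card_nonMemberSubfamily i F
  have hsplit_mem := card_memberSubfamily_add_card_nonMemberSubfamily j (memberSubfamily i F)
  have hsplit_non := card_memberSubfamily_add_card_nonMemberSubfamily j (nonMemberSubfamily i F)
  have hsplit_j := card_memberSubfamily_add_card_nonMemberSubfamily i (nonMemberSubfamily j F)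
  rw [memberSubfamily_nonMemberSubfamily_comm hij, nonMemberSubfamily_comm] at hsplit_j
  have hequal := card_add_card_le_of_crossIntersecting hr hW
    (nonMemberSubfamily_subset_powersetCard hnon) (memberSubfamily_subset_powersetCard hmem)
    (crossIntersecting_nonMemberSubfamily_nonMemberSubfamily hint) (hij_le.trans hmono)
  have hdifferent := card_add_card_le_two_mul_choose hr hW
    (nonMemberSubfamily_subset_powersetCard hmem) (memberSubfamily_subset_powersetCard hnon)
    (crossIntersecting_nonMemberSubfamily_memberSubfamily_of_ne hij hint) (by omega) (by omega)
  omega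

end SizeBounds

theorem card_le_of_choose_le_card_nonMemberSubfamily {c r : ℕ} (hr : 2 * c + 2 ≤ r)
    {F : Finset (Finset (Fin (r + 4)))} (hF : F ⊆ powersetCard (c + 3) univ)
    (hint : (F : Set (Finset (Fin (r + 4)))).Intersecting)
    (hdiv : ∀ x, r.choose c ≤ #(nonMemberSubfamily x F)) :
    #F ≤ (r + 2).choose (c + 1) + 2 * (r + 1).choose (c + 1) := by
  by_cases hmid : ∃ x, #(nonMemberSubfamily x F) ≤ (r + 1).choose (c + 1)
  · obtain ⟨x, hx⟩ := hmid
    exact card_le_of_card_nonMemberSubfamily_mem_Icc hr hint (W := univ.erase x)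
      (by rwa [insert_erase (mem_univ x)]) (by simp) ⟨hdiv x, hx⟩
  push Not at hmid
  by_cases hcompressed : ∀ i j : Fin (r + 4), i < j → UV.IsCompressed {i} {j} F
  · have hinsert : insert 0 (univ.erase 0) = (univ : Finset (Fin (r + 4))) :=
      insert_erase (mem_univ 0)
    exact card_le_of_isShiftedOn hr hint (W := univ.erase 0) (hinsert.symm ▸ hF) (by simp)
      (fun y hy => Fin.pos_iff_ne_zero.2 (ne_of_mem_erase hy))
      (hinsert.symm ▸ isShiftedOn_univ_of_isCompressed hcompressed) (hmid 0).le
  push Not at hcompressed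
  obtain ⟨i, j, hij, hnot⟩ := hcompressed
  obtain hle | hge := le_total (#(nonMemberSubfamily j (nonMemberSubfamily i F))) (r.choose c)
  · have hj : j ∈ univ.erase i := mem_erase.2 ⟨hij.ne', mem_univ j⟩
    exact card_le_of_card_nonMemberSubfamily_nonMemberSubfamily_le hr hint
      (W := (univ.erase i).erase j) (by rwa [insert_erase hj, insert_erase (mem_univ i)])
      (by simp [card_erase_of_mem hj]) hij.ne hle (hmid i).le (hmid j).le
  have hlt := sum_sum_compression_lt hij hnot
  rw [← UV.card_compression {i} {j} F]
  refine card_le_of_choose_le_card_nonMemberSubfamily hr ?_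
    (intersecting_compression_singleton hij.ne hint) fun x => ?_
  · rw [subset_powersetCard_univ_iff] at hF ⊢
    exact hF.uvCompression (by simp)
  · obtain rfl | hx := eq_or_ne x i
    · exact hge.trans
        (card_le_card (nonMemberSubfamily_nonMemberSubfamily_subset_compression hij.ne))
    · exact (hdiv x).trans
        (card_nonMemberSubfamily_le_card_nonMemberSubfamily_compression hij.ne hx)
termination_by ∑ A ∈ F, ∑ x ∈ A, x.val

end LargeDiversity

/-- The bound (4) on intersecting families with large diversity: if `n > 2k ≥ 6`
and `F` is an intersecting family of `k`-subsets of `[n]` with diversity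
`γ(F) ≥ C(n-4, k-3)`, then `|F| ≤ C(n-2, k-2) + 2·C(n-3, k-2)`. -/
theorem large_diversity_size_bound (n k : ℕ) (hk : 3 ≤ k) (hn : 2 * k < n)
    (F : Finset (Finset (Fin n)))
    (hcard : ∀ A ∈ F, A.card = k)
    (hint : ∀ A ∈ F, ∀ B ∈ F, (A ∩ B).Nonempty)
    (hdiv : (n - 4).choose (k - 3) ≤
      F.card - Finset.univ.sup (fun i : Fin n => (F.filter (fun A => i ∈ A)).card)) :
    F.card ≤ (n - 2).choose (k - 2) + 2 * (n - 3).choose (k - 2) := by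
  obtain ⟨c, rfl⟩ := Nat.exists_eq_add_of_le' hk
  obtain ⟨r, rfl⟩ : ∃ r, n = r + 4 := ⟨n - 4, by omega⟩
  refine LargeDiversity.card_le_of_choose_le_card_nonMemberSubfamily (by omega)
    (Finset.subset_powersetCard_univ_iff.2 fun A hA => hcard A hA)
    (fun A hA B hB => Finset.not_disjoint_iff_nonempty_inter.2 (hint A hA B hB)) fun x => ?_
  have hdegree : (F.filter (x ∈ ·)).card ≤ Finset.univ.sup fun i => (F.filter (i ∈ ·)).card :=
    Finset.le_sup (f := fun i => (F.filter (i ∈ ·)).card) (Finset.mem_univ x)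
  have hsplit : (F.filter (x ∈ ·)).card + (F.nonMemberSubfamily x).card = F.card :=
    Finset.card_filter_add_card_filter_not _
  rw [Nat.add_sub_cancel, Nat.add_sub_cancel] at hdiv
  omega
end

section
/- Let n > 2k > 0 and let F be an intersecting family of k-element subsets of [n]. If the diversity satisfies γ(F) ≥ C(n-u-1, n-k-1) for some integer u with 3 ≤ u ≤ k, then |F| ≤ C(n-1, k-1) + C(n-u-1, n-k-1) - C(n-u-1, k-1). -/
/-!
Let `x` be a point of maximum degree, so that the diversity is the number `g` of sets of `F`
avoiding `x`. The link of `x` and the family of sets avoiding `x` are cross-intersecting: the link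
misses the iterated shadow of the complements (within `[n] \ {x}`) of the sets avoiding `x`. If
`C(n-u-1, n-k-1) ≤ g ≤ C(n-3, n-k-1) + C(n-4, n-k-2)`, then Kruskal–Katona makes this shadow so
large that the bound follows: beyond `C(N, n-k-1)` sets the shadow grows at least as fast as the
family, because the sets added in colex order are cones over sets in few points, where shadows are
no smaller than the families themselves.

If `g` is larger, take a UV-compression that brings in `x`, with `u` of minimal size among those
that change `F`. Minimality keeps the family intersecting, `x` keeps the maximum degree, and `g`
decreases, but by at most `C(n-3, k-2) = C(n-3, n-k-1)`. As `C(n-4, n-k-1) ≤ C(n-4, n-k-2)`, the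
process cannot jump below the window, and it stops inside it with `|F|` unchanged.

The parametrization `k = s + 2`, `n = r + s + 4` avoids truncated subtraction: `2k ≤ n` becomes
`s ≤ r`, and `n-k-1` becomes `r + 1`.
-/

namespace KupavskiiZakharov

open Finset Finset.Colex
open scoped FinsetFamily

section Shadow

variable {α β : Type*} {𝒜 : Finset (Finset α)} {W : Finset α} {i r s N : ℕ}

lemma sized_map_mapEmbedding (f : α ↪ β) (h𝒜 : (𝒜 : Set (Finset α)).Sized r) :
    (𝒜.map (mapEmbedding f).toEmbedding : Set (Finset β)).Sized r := by
  simp only [Set.Sized, mem_coe, mem_map, RelEmbedding.coe_toEmbedding, mapEmbedding_apply]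
  rintro _ ⟨S, hS, rfl⟩
  rw [card_map, h𝒜 hS]

variable [DecidableEq α] [DecidableEq β]

lemma iterate_shadow_subset_powersetCard (h𝒜 : 𝒜 ⊆ powersetCard (s + i) W) :
    ∂^[i] 𝒜 ⊆ powersetCard s W := by
  intro S hS
  obtain ⟨T, hT, hST, hcard⟩ := mem_shadow_iterate_iff_exists_mem_card_add.1 hS
  obtain ⟨hTW, hTcard⟩ := mem_powersetCard.1 (h𝒜 hT)
  exact mem_powersetCard.2 ⟨hST.trans hTW, by lia⟩

lemma shadow_map_mapEmbedding (f : α ↪ β) (𝒜 : Finset (Finset α)) :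
    ∂ (𝒜.map (mapEmbedding f).toEmbedding) = (∂ 𝒜).map (mapEmbedding f).toEmbedding := by
  ext S
  simp only [mem_shadow_iff, mem_map, RelEmbedding.coe_toEmbedding, mapEmbedding_apply]
  constructor
  · rintro ⟨_, ⟨T, hT, rfl⟩, _, hx, rfl⟩
    obtain ⟨x, hxT, rfl⟩ := mem_map.1 hx
    exact ⟨T.erase x, ⟨T, hT, x, hxT, rfl⟩, map_erase f T x⟩
  · rintro ⟨_, ⟨T, hT, x, hx, rfl⟩, rfl⟩
    exact ⟨T.map f, ⟨T, hT, rfl⟩, f x, mem_map_of_mem f hx, (map_erase f T x).symm⟩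

lemma card_iterate_shadow_map_mapEmbedding (f : α ↪ β) (𝒜 : Finset (Finset α)) (i : ℕ) :
    #(∂^[i] (𝒜.map (mapEmbedding f).toEmbedding)) = #(∂^[i] 𝒜) := by
  have hcomm : Function.Semiconj (fun ℬ : Finset (Finset α) ↦ ℬ.map (mapEmbedding f).toEmbedding)
    ∂ ∂ := fun ℬ ↦ (shadow_map_mapEmbedding f ℬ).symm
  rw [← hcomm.iterate_right i 𝒜, card_map]

lemma card_filter_subset_le_of_subset_powersetCard (h𝒜 : 𝒜 ⊆ powersetCard r W) (S : Finset α) :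
    #{T ∈ 𝒜 | S ⊆ T} ≤ (#W - #S).choose (r - #S) := by
  by_cases hSW : S ⊆ W
  · rw [← card_sdiff_of_subset hSW, ← card_powersetCard]
    refine card_le_card_of_injOn (· \ S) (fun T hT ↦ ?_) fun T hT T' hT' h ↦ ?_
    · obtain ⟨hT, hST⟩ := mem_filter.1 hT
      obtain ⟨hTW, hTcard⟩ := mem_powersetCard.1 (h𝒜 hT)
      exact mem_coe.2 <| mem_powersetCard.2
        ⟨sdiff_subset_sdiff hTW le_rfl, by rw [card_sdiff_of_subset hST, hTcard]⟩
    · rw [← sdiff_union_of_subset (mem_filter.1 hT).2, ← sdiff_union_of_subset (mem_filter.1 hT').2]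
      exact congrArg (· ∪ S) h
  · have : {T ∈ 𝒜 | S ⊆ T} = ∅ := filter_eq_empty_iff.2 fun T hT hST ↦
      hSW (hST.trans (mem_powersetCard.1 (h𝒜 hT)).1)
    simp [this]

/- The double count behind the normalized matching property: a set of the family contains
`r.choose s` sets of the shadow, and a set of the shadow lies in at most that many sets. -/
lemma card_le_card_iterate_shadow (h𝒜 : 𝒜 ⊆ powersetCard r W) (hsr : s ≤ r) (hW : #W ≤ r + s) :
    #𝒜 ≤ #(∂^[r - s] 𝒜) := by
  refine Nat.le_of_mul_le_mul_right ?_ (Nat.choose_pos hsr)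
  refine card_mul_le_card_mul (fun T S ↦ S ⊆ T) (fun T hT ↦ ?_) fun S hS ↦ ?_
  · have hTcard : #T = r := (mem_powersetCard.1 (h𝒜 hT)).2
    have hcard : #(powersetCard s T) = r.choose s := by rw [card_powersetCard, hTcard]
    rw [← hcard]
    refine card_le_card fun S hS ↦ ?_
    obtain ⟨hST, hScard⟩ := mem_powersetCard.1 hS
    have hSshadow : S ∈ ∂^[r - s] 𝒜 :=
      mem_shadow_iterate_iff_exists_mem_card_add.2 ⟨T, hT, hST, by lia⟩
    exact (mem_bipartiteAbove _).2 ⟨hSshadow, hST⟩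
  · have h𝒜' : 𝒜 ⊆ powersetCard (s + (r - s)) W := by rwa [Nat.add_sub_cancel' hsr]
    have hScard : #S = s := (mem_powersetCard.1 (iterate_shadow_subset_powersetCard h𝒜' hS)).2
    calc #(bipartiteBelow (fun T S ↦ S ⊆ T) 𝒜 S) ≤ (#W - s).choose (r - s) :=
          hScard ▸ card_filter_subset_le_of_subset_powersetCard h𝒜 S
      _ ≤ r.choose (r - s) := Nat.choose_le_choose _ (by lia)
      _ = r.choose s := Nat.choose_symm hsr

lemma choose_le_choose_of_le_add (hsr : s ≤ r) (hN : N ≤ r + s) : N.choose r ≤ N.choose s := by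
  have h : powersetCard r (range N) ⊆ powersetCard (s + (r - s)) (range N) := by
    rw [Nat.add_sub_cancel' hsr]
  calc N.choose r = #(powersetCard r (range N)) := by rw [card_powersetCard, card_range]
    _ ≤ #(∂^[r - s] (powersetCard r (range N))) :=
      card_le_card_iterate_shadow subset_rfl hsr (by rwa [card_range])
    _ ≤ #(powersetCard s (range N)) := card_le_card (iterate_shadow_subset_powersetCard h)
    _ = N.choose s := by rw [card_powersetCard, card_range]

end Shadow

section Colex

variable {m r s b : ℕ} {a : Fin m} {𝒟 : Finset (Finset (Fin m))}

lemma isInitSeg_powersetCard_Iio (a : Fin m) (r : ℕ) : IsInitSeg (powersetCard r (Iio a)) r := by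
  refine ⟨Set.sized_powersetCard _ _, fun S T hS ⟨hTS, hT⟩ ↦ mem_powersetCard.2 ⟨fun i hi ↦ ?_, hT⟩⟩
  have hSa : ∀ j ∈ S, j < a := fun j hj ↦ mem_Iio.1 ((mem_powersetCard.1 hS).1 hj)
  exact mem_Iio.2 (forall_lt_mono hTS.le hSa i hi)

lemma exists_isInitSeg_card_eq (hb : b ≤ m.choose r) :
    ∃ 𝒞 : Finset (Finset (Fin m)), IsInitSeg 𝒞 r ∧ #𝒞 = b := by
  induction b with
  | zero => exact ⟨∅, isInitSeg_empty, rfl⟩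
  | succ b ih =>
    obtain ⟨𝒞, h𝒞, rfl⟩ := ih (by lia)
    obtain ⟨S, hS, hmin⟩ := exists_min_image (powersetCard r univ \ 𝒞) toColex <| by
      rw [sdiff_nonempty]
      intro h
      have := card_le_card h
      rw [card_powersetCard, card_univ, Fintype.card_fin] at this
      lia
    simp only [mem_sdiff, mem_powersetCard, subset_univ, true_and] at hS hmin
    refine ⟨insert S 𝒞, ⟨?_, fun T U hT ⟨hUT, hU⟩ ↦ ?_⟩, card_insert_of_notMem hS.2⟩
    · rintro T hT
      obtain rfl | hT := mem_insert.1 hT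
      exacts [hS.1, h𝒞.1 hT]
    · refine mem_insert_of_mem ?_
      obtain rfl | hT := mem_insert.1 hT
      · exact by_contra fun hU𝒞 ↦ (hmin U ⟨hU, hU𝒞⟩).not_gt hUT
      · exact h𝒞.2 hT ⟨hUT, hU⟩

/-- The first two blocks of the cascade representation: all `(r + 1)`-sets below `a`, followed by
the sets `insert a D` for `D ∈ 𝒟`, where `𝒟` is meant to consist of `r`-sets below `a`. -/
def cascade (a : Fin m) (r : ℕ) (𝒟 : Finset (Finset (Fin m))) : Finset (Finset (Fin m)) :=
  powersetCard (r + 1) (Iio a) ∪ 𝒟.image (insert a)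

lemma mem_cascade {S : Finset (Fin m)} :
    S ∈ cascade a r 𝒟 ↔ S ∈ powersetCard (r + 1) (Iio a) ∨ ∃ D ∈ 𝒟, insert a D = S := by
  rw [cascade, mem_union, mem_image]

lemma card_cascade (h𝒟 : ∀ D ∈ 𝒟, D ⊆ Iio a) : #(cascade a r 𝒟) = (a : ℕ).choose (r + 1) + #𝒟 := by
  have ha : ∀ D ∈ 𝒟, a ∉ D := fun D hD haD ↦ lt_irrefl a (mem_Iio.1 (h𝒟 D hD haD))
  rw [cascade, card_union_of_disjoint, card_powersetCard, Fin.card_Iio, card_image_of_injOn]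
  · intro D hD E hE h
    rw [← erase_insert (ha D hD), ← erase_insert (ha E hE)]
    exact congrArg (erase · a) h
  · refine disjoint_left.2 fun S hS hS' ↦ ?_
    obtain ⟨D, -, rfl⟩ := mem_image.1 hS'
    exact lt_irrefl a <| mem_Iio.1 <| (mem_powersetCard.1 hS).1 (mem_insert_self a D)

lemma isInitSeg_cascade (h𝒟 : IsInitSeg 𝒟 r) (h𝒟a : ∀ D ∈ 𝒟, D ⊆ Iio a) :
    IsInitSeg (cascade a r 𝒟) (r + 1) := by
  have ha : ∀ D ∈ 𝒟, a ∉ D := fun D hD haD ↦ lt_irrefl a (mem_Iio.1 (h𝒟a D hD haD))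
  refine ⟨fun S hS ↦ ?_, fun S T hS ⟨hTS, hT⟩ ↦ ?_⟩
  · obtain hS | ⟨D, hD, rfl⟩ := mem_cascade.1 hS
    · exact (mem_powersetCard.1 hS).2
    · rw [card_insert_of_notMem (ha D hD), h𝒟.1 hD]
  obtain hS | ⟨D, hD, rfl⟩ := mem_cascade.1 hS
  · exact mem_cascade.2 <| .inl <| (isInitSeg_powersetCard_Iio a _).2 hS ⟨hTS, hT⟩
  have hTa : ∀ i ∈ T, i ≤ a := forall_le_mono hTS.le fun i hi ↦ by
    obtain rfl | hi := mem_insert.1 hi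
    exacts [le_rfl, (mem_Iio.1 (h𝒟a D hD hi)).le]
  by_cases haT : a ∈ T
  · have hlt : toColex (T.erase a) < toColex D := by
      rw [← erase_insert (ha D hD), erase_eq, erase_eq]
      exact (toColex_sdiff_lt_toColex_sdiff (singleton_subset_iff.2 haT)
        (singleton_subset_iff.2 (mem_insert_self a D))).2 hTS
    refine mem_cascade.2 <| .inr ⟨T.erase a, h𝒟.2 hD ⟨hlt, ?_⟩, insert_erase haT⟩
    rw [card_erase_of_mem haT, hT, Nat.add_sub_cancel]
  · refine mem_cascade.2 <| .inl <| mem_powersetCard.2 ⟨fun i hi ↦ ?_, hT⟩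
    exact mem_Iio.2 <| (hTa i hi).lt_of_ne <| ne_of_mem_of_not_mem hi haT

lemma cascade_iterate_shadow_subset (h𝒟a : ∀ D ∈ 𝒟, D ⊆ Iio a) (hsr : s ≤ r) (hra : r + 1 ≤ a) :
    cascade a s (∂^[r - s] 𝒟) ⊆ ∂^[r - s] (cascade a r 𝒟) := by
  intro S hS
  obtain hS | ⟨E, hE, rfl⟩ := mem_cascade.1 hS
  · obtain ⟨hSa, hScard⟩ := mem_powersetCard.1 hS
    obtain ⟨T, hST, hTa, hTcard⟩ := exists_subsuperset_card_eq hSa (n := r + 1) (by lia)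
      (by rwa [Fin.card_Iio])
    exact mem_shadow_iterate_iff_exists_mem_card_add.2
      ⟨T, mem_cascade.2 <| .inl <| mem_powersetCard.2 ⟨hTa, hTcard⟩, hST, by lia⟩
  · obtain ⟨D, hD, hED, hcard⟩ := mem_shadow_iterate_iff_exists_mem_card_add.1 hE
    have haD : a ∉ D := fun haD ↦ lt_irrefl a (mem_Iio.1 (h𝒟a D hD haD))
    refine mem_shadow_iterate_iff_exists_mem_card_add.2
      ⟨insert a D, mem_cascade.2 <| .inr ⟨D, hD, rfl⟩, insert_subset_insert a hED, ?_⟩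
    rw [card_insert_of_notMem haD, card_insert_of_notMem (notMem_mono hED haD)]
    lia

/- By Kruskal–Katona it suffices to treat a cascade, where only the second block has to grow. -/
lemma card_add_choose_le_card_iterate_shadow_of_le_add {𝒜 : Finset (Finset (Fin m))}
    (h𝒜 : (𝒜 : Set (Finset (Fin m))).Sized (r + 1)) (hsr : s ≤ r) (hra : r + 1 ≤ a) (hba : b ≤ a)
    (hb : b ≤ r + s) (hlow : (a : ℕ).choose (r + 1) ≤ #𝒜)
    (hupp : #𝒜 ≤ (a : ℕ).choose (r + 1) + b.choose r) :
    #𝒜 + (a : ℕ).choose (s + 1) ≤ #(∂^[r - s] 𝒜) + (a : ℕ).choose (r + 1) := by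
  obtain ⟨d, hd⟩ := Nat.exists_eq_add_of_le hlow
  have hdb : d ≤ b.choose r := by lia
  let b' : Fin m := ⟨b, hba.trans_lt a.2⟩
  obtain ⟨𝒟, h𝒟, rfl⟩ := exists_isInitSeg_card_eq (hdb.trans (Nat.choose_le_choose r b'.2.le))
  have h𝒟b : 𝒟 ⊆ powersetCard r (Iio b') := by
    obtain h | h := h𝒟.total (isInitSeg_powersetCard_Iio b' r)
    · exact h
    · exact (eq_of_subset_of_card_le h (by rwa [card_powersetCard, Fin.card_Iio])).ge
  have h𝒟a : ∀ D ∈ 𝒟, D ⊆ Iio a := fun D hD ↦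
    (mem_powersetCard.1 (h𝒟b hD)).1.trans (Iio_subset_Iio hba)
  have hshadow : ∀ E ∈ ∂^[r - s] 𝒟, E ⊆ Iio a := fun E hE ↦ by
    obtain ⟨D, hD, hED, -⟩ := mem_shadow_iterate_iff_exists_mem_card_add.1 hE
    exact hED.trans (h𝒟a D hD)
  have hgrow : #𝒟 ≤ #(∂^[r - s] 𝒟) :=
    card_le_card_iterate_shadow h𝒟b hsr (by rwa [Fin.card_Iio])
  have hkk : #(∂^[r - s] (cascade a r 𝒟)) ≤ #(∂^[r - s] 𝒜) :=
    iterated_kk h𝒜 (by rw [card_cascade h𝒟a, hd]) (isInitSeg_cascade h𝒟 h𝒟a)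
  have hcascade := (card_le_card (cascade_iterate_shadow_subset h𝒟a hsr hra)).trans hkk
  rw [card_cascade hshadow] at hcascade
  lia

end Colex

section ShadowGrowth

variable {α : Type*} [Finite α] [DecidableEq α] {𝒜 : Finset (Finset α)} {r s N i : ℕ}

lemma card_add_choose_le_card_iterate_shadow_fin {m : ℕ} {𝒜 : Finset (Finset (Fin m))}
    (h𝒜 : (𝒜 : Set (Finset (Fin m))).Sized (r + 1)) (hm : r + s + 1 < m) (hsr : s ≤ r)
    (hrN : r + 1 ≤ N) (hN : N ≤ r + s + 1) (hlow : N.choose (r + 1) ≤ #𝒜)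
    (hupp : #𝒜 ≤ (r + s + 1).choose (r + 1) + (r + s).choose r) :
    #𝒜 + N.choose (s + 1) ≤ #(∂^[r - s] 𝒜) + N.choose (r + 1) := by
  induction hN using Nat.decreasingInduction with
  | self =>
    exact card_add_choose_le_card_iterate_shadow_of_le_add (a := ⟨r + s + 1, hm⟩) h𝒜 hsr hrN
      (Nat.le_succ _) le_rfl hlow hupp
  | of_succ N hN ih =>
    obtain h | h := le_total #𝒜 ((N + 1).choose (r + 1))
    · rw [Nat.choose_succ_succ', add_comm] at h
      exact card_add_choose_le_card_iterate_shadow_of_le_add (a := ⟨N, by lia⟩) h𝒜 hsr hrN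
        le_rfl (by lia) hlow h
    · have hnext := ih (by lia) h
      have hchoose : N.choose r ≤ N.choose s := choose_le_choose_of_le_add hsr (by lia)
      rw [Nat.choose_succ_succ', Nat.choose_succ_succ'] at hnext
      lia

lemma card_add_choose_le_card_iterate_shadow (h𝒜 : (𝒜 : Set (Finset α)).Sized (r + 1))
    (hsr : s ≤ r) (hrN : r + 1 ≤ N) (hN : N ≤ r + s + 1) (hlow : N.choose (r + 1) ≤ #𝒜)
    (hupp : #𝒜 ≤ (r + s + 1).choose (r + 1) + (r + s).choose r) :
    #𝒜 + N.choose (s + 1) ≤ #(∂^[r - s] 𝒜) + N.choose (r + 1) := by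
  cases nonempty_fintype α
  obtain ⟨f⟩ : Nonempty (α ↪ Fin (Fintype.card α + (r + s + 2))) :=
    Function.Embedding.nonempty_of_card_le (by simp)
  rw [← card_map (mapEmbedding f).toEmbedding] at hlow hupp ⊢
  rw [← card_iterate_shadow_map_mapEmbedding f]
  exact card_add_choose_le_card_iterate_shadow_fin (sized_map_mapEmbedding f h𝒜) (by lia) hsr hrN
    hN hlow hupp

lemma choose_le_card_iterate_shadow (h𝒜 : (𝒜 : Set (Finset α)).Sized r) (hir : i ≤ r)
    (hrN : r ≤ N) (hlow : N.choose r ≤ #𝒜) : N.choose (r - i) ≤ #(∂^[i] 𝒜) := by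
  cases nonempty_fintype α
  obtain ⟨f⟩ : Nonempty (α ↪ Fin (Fintype.card α + N)) :=
    Function.Embedding.nonempty_of_card_le (by simp)
  rw [← card_map (mapEmbedding f).toEmbedding] at hlow
  rw [← card_iterate_shadow_map_mapEmbedding f]
  exact kruskal_katona_lovasz_form hir hrN (by lia) (sized_map_mapEmbedding f h𝒜) hlow

end ShadowGrowth

section CrossIntersecting

variable {α : Type*} {𝒜 ℬ : Finset (Finset α)} {W : Finset α} {a b r s N : ℕ}

section Compl

variable [DecidableEq α] {i : ℕ}

/-- The family of complements `W \ T` of the members `T` of `ℬ`, relative to a ground set `W`. -/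
def complsWithin (W : Finset α) (ℬ : Finset (Finset α)) : Finset (Finset α) := ℬ.image (W \ ·)

lemma card_complsWithin (hℬ : ∀ T ∈ ℬ, T ⊆ W) : #(complsWithin W ℬ) = #ℬ := by
  refine card_image_of_injOn fun T hT T' hT' h ↦ ?_
  rw [← Finset.sdiff_sdiff_eq_self (hℬ T hT), ← Finset.sdiff_sdiff_eq_self (hℬ T' hT')]
  exact congrArg (W \ ·) h

lemma complsWithin_subset_powersetCard (hℬ : ℬ ⊆ powersetCard b W) (hW : #W = a + b) :
    complsWithin W ℬ ⊆ powersetCard a W := by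
  refine image_subset_iff.2 fun T hT ↦ ?_
  obtain ⟨hTW, hTcard⟩ := mem_powersetCard.1 (hℬ hT)
  exact mem_powersetCard.2 ⟨sdiff_subset, by rw [card_sdiff_of_subset hTW]; lia⟩

/- A set in the shadow of the complements is disjoint from some member of `ℬ`. -/
lemma card_add_card_iterate_shadow_complsWithin_le (h𝒜 : 𝒜 ⊆ powersetCard a W)
    (hℬ : ℬ ⊆ powersetCard b W) (hW : #W = a + i + b)
    (hcross : ∀ S ∈ 𝒜, ∀ T ∈ ℬ, ¬Disjoint S T) :
    #𝒜 + #(∂^[i] (complsWithin W ℬ)) ≤ (#W).choose a := by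
  have hdisj : Disjoint 𝒜 (∂^[i] (complsWithin W ℬ)) := by
    refine disjoint_left.2 fun S hS hS' ↦ ?_
    obtain ⟨_, hU, hSU, -⟩ := mem_shadow_iterate_iff_exists_mem_card_add.1 hS'
    obtain ⟨T, hT, rfl⟩ := mem_image.1 hU
    exact hcross S hS T hT (disjoint_sdiff_self_left.mono_left hSU)
  rw [← card_union_of_disjoint hdisj, ← card_powersetCard]
  exact card_le_card <| union_subset h𝒜 <|
    iterate_shadow_subset_powersetCard (complsWithin_subset_powersetCard hℬ hW)

end Compl

variable [Finite α]

lemma card_add_card_add_choose_le_of_cross (h𝒜 : 𝒜 ⊆ powersetCard (s + 1) W)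
    (hℬ : ℬ ⊆ powersetCard b W) (hW : #W = r + 1 + b) (hcross : ∀ S ∈ 𝒜, ∀ T ∈ ℬ, ¬Disjoint S T)
    (hsr : s ≤ r) (hrN : r + 1 ≤ N) (hN : N ≤ r + s + 1) (hlow : N.choose (r + 1) ≤ #ℬ)
    (hupp : #ℬ ≤ (r + s + 1).choose (r + 1) + (r + s).choose r) :
    #𝒜 + #ℬ + N.choose (s + 1) ≤ (#W).choose (s + 1) + N.choose (r + 1) := by
  classical
  have hcompl : #(complsWithin W ℬ) = #ℬ :=
    card_complsWithin fun T hT ↦ (mem_powersetCard.1 (hℬ hT)).1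
  have hgrow := card_add_choose_le_card_iterate_shadow (𝒜 := complsWithin W ℬ)
    (fun T hT ↦ (mem_powersetCard.1 (complsWithin_subset_powersetCard hℬ hW hT)).2) hsr hrN hN
    (by rwa [hcompl]) (by rwa [hcompl])
  have hshadow := card_add_card_iterate_shadow_complsWithin_le (i := r - s) h𝒜 hℬ (by lia) hcross
  lia

lemma card_add_choose_le_of_cross (h𝒜 : 𝒜 ⊆ powersetCard a W) (hℬ : ℬ ⊆ powersetCard b W)
    (hW : #W = r + b) (hcross : ∀ S ∈ 𝒜, ∀ T ∈ ℬ, ¬Disjoint S T) (har : a ≤ r) (hrN : r ≤ N)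
    (hlow : N.choose r ≤ #ℬ) : #𝒜 + N.choose a ≤ (#W).choose a := by
  classical
  have hcompl : #(complsWithin W ℬ) = #ℬ :=
    card_complsWithin fun T hT ↦ (mem_powersetCard.1 (hℬ hT)).1
  have hgrow := choose_le_card_iterate_shadow (𝒜 := complsWithin W ℬ) (i := r - a)
    (fun T hT ↦ (mem_powersetCard.1 (complsWithin_subset_powersetCard hℬ hW hT)).2) (by lia) hrN
    (by rwa [hcompl])
  have hshadow := card_add_card_iterate_shadow_complsWithin_le (i := r - a) h𝒜 hℬ (by lia) hcross
  rw [Nat.sub_sub_self har] at hgrow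
  lia

end CrossIntersecting

section Link

variable {α : Type*} [DecidableEq α] {F : Finset (Finset α)} {W : Finset α} {x y : α} {k : ℕ}

lemma memberSubfamily_subset_powersetCard (hF : F ⊆ powersetCard (k + 1) W) (x : α) :
    F.memberSubfamily x ⊆ powersetCard k (W.erase x) := by
  intro S hS
  obtain ⟨hS, hxS⟩ := mem_memberSubfamily.1 hS
  obtain ⟨hSW, hScard⟩ := mem_powersetCard.1 (hF hS)
  rw [card_insert_of_notMem hxS] at hScard
  exact mem_powersetCard.2
    ⟨subset_erase.2 ⟨(subset_insert x S).trans hSW, hxS⟩, Nat.succ_injective hScard⟩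

lemma nonMemberSubfamily_subset_powersetCard (hF : F ⊆ powersetCard k W) (x : α) :
    F.nonMemberSubfamily x ⊆ powersetCard k (W.erase x) := by
  intro S hS
  obtain ⟨hS, hxS⟩ := mem_nonMemberSubfamily.1 hS
  obtain ⟨hSW, hScard⟩ := mem_powersetCard.1 (hF hS)
  exact mem_powersetCard.2 ⟨subset_erase.2 ⟨hSW, hxS⟩, hScard⟩

lemma card_filter_mem_eq_card_memberSubfamily (F : Finset (Finset α)) (x : α) :
    #{S ∈ F | x ∈ S} = #(F.memberSubfamily x) := by
  have hsplit : #{S ∈ F | x ∈ S} + #(F.nonMemberSubfamily x) = #F :=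
    card_filter_add_card_filter_not _
  have := card_memberSubfamily_add_card_nonMemberSubfamily x F
  lia

lemma not_disjoint_of_mem_memberSubfamily (hF : (F : Set (Finset α)).Intersecting) {S T : Finset α}
    (hS : S ∈ F.memberSubfamily x) (hT : T ∈ F.nonMemberSubfamily x) : ¬Disjoint S T := fun h ↦ by
  rw [mem_memberSubfamily] at hS
  rw [mem_nonMemberSubfamily] at hT
  exact hF hS.1 hT.1 (disjoint_insert_left.2 ⟨hT.2, h⟩)

lemma not_disjoint_of_mem_nonMemberSubfamily_memberSubfamily
    (hF : (F : Set (Finset α)).Intersecting) {S T : Finset α}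
    (hS : S ∈ (F.nonMemberSubfamily x).memberSubfamily y)
    (hT : T ∈ (F.nonMemberSubfamily y).memberSubfamily x) : ¬Disjoint S T := fun h ↦ by
  simp only [mem_memberSubfamily, mem_nonMemberSubfamily] at hS hT
  refine hF hS.1.1 hT.1.1 (disjoint_insert_left.2 ⟨hT.1.2, disjoint_insert_right.2 ⟨?_, h⟩⟩)
  exact notMem_mono (subset_insert y S) hS.1.2

end Link

section Compression

variable {α : Type*} [DecidableEq α] {F : Finset (Finset α)} {u v S T : Finset α} {x y : α}

lemma subset_and_disjoint_of_notMem_compression (hS : S ∈ F) (hS' : S ∉ UV.compression u v F) :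
    v ⊆ S ∧ Disjoint u S := by
  by_contra h
  refine hS' (UV.mem_compression.2 (.inl ⟨hS, ?_⟩))
  rwa [UV.compress, if_neg fun h' ↦ h h'.symm]

lemma mem_of_mem_compression_of_notMem (hxu : x ∈ u) (hS : S ∈ UV.compression u v F)
    (hxS : x ∉ S) : S ∈ F :=
  by_contra fun hSF ↦ hxS (UV.le_of_mem_compression_of_notMem hS hSF hxu)

lemma mem_compression_of_mem (hxu : x ∈ u) (hS : S ∈ F) (hxS : x ∈ S) :
    S ∈ UV.compression u v F :=
  by_contra fun hS' ↦
    disjoint_left.1 (subset_and_disjoint_of_notMem_compression hS hS').2 hxu hxS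

lemma nonMemberSubfamily_compression_subset (hxu : x ∈ u) :
    (UV.compression u v F).nonMemberSubfamily x ⊆ F.nonMemberSubfamily x := fun S hS ↦ by
  obtain ⟨hS, hxS⟩ := mem_nonMemberSubfamily.1 hS
  exact mem_nonMemberSubfamily.2 ⟨mem_of_mem_compression_of_notMem hxu hS hxS, hxS⟩

lemma card_nonMemberSubfamily_compression_lt (hxu : x ∈ u) (h : ¬UV.IsCompressed u v F) :
    #((UV.compression u v F).nonMemberSubfamily x) < #(F.nonMemberSubfamily x) := by
  have hF : ¬F ⊆ UV.compression u v F := fun hF ↦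
    h (eq_of_subset_of_card_le hF (UV.card_compression u v F).le).symm
  obtain ⟨S, hS, hS'⟩ := not_subset.1 hF
  have hxS : x ∉ S :=
    disjoint_left.1 (subset_and_disjoint_of_notMem_compression hS hS').2 hxu
  refine card_lt_card ⟨nonMemberSubfamily_compression_subset hxu, fun hle ↦ hS' ?_⟩
  exact (mem_nonMemberSubfamily.1 (hle (mem_nonMemberSubfamily.2 ⟨hS, hxS⟩))).1

lemma card_nonMemberSubfamily_le_card_compression_add (u v : Finset α) (F : Finset (Finset α))
    (x : α) : #(F.nonMemberSubfamily x) ≤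
      #((UV.compression u v F).nonMemberSubfamily x) + #{S ∈ F.nonMemberSubfamily x | v ⊆ S} := by
  refine (card_le_card fun S hS ↦ ?_).trans (card_union_le _ _)
  obtain ⟨hSF, hxS⟩ := mem_nonMemberSubfamily.1 hS
  by_cases hS' : S ∈ UV.compression u v F
  · exact mem_union_left _ (mem_nonMemberSubfamily.2 ⟨hS', hxS⟩)
  · exact mem_union_right _ <|
      mem_filter.2 ⟨hS, (subset_and_disjoint_of_notMem_compression hSF hS').1⟩

lemma card_nonMemberSubfamily_compression_le (hxu : x ∈ u)
    (hF : #(F.nonMemberSubfamily x) ≤ #(F.nonMemberSubfamily y)) :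
    #((UV.compression u v F).nonMemberSubfamily x) ≤
      #((UV.compression u v F).nonMemberSubfamily y) := by
  rw [← card_sdiff_le_card_sdiff_iff] at hF ⊢
  refine (card_le_card fun S hS ↦ ?_).trans (hF.trans (card_le_card fun S hS ↦ ?_))
  all_goals
    simp only [mem_sdiff, mem_nonMemberSubfamily, not_and, not_not] at hS ⊢
  · obtain ⟨⟨hS, hxS⟩, hyS⟩ := hS
    exact ⟨⟨mem_of_mem_compression_of_notMem hxu hS hxS, hxS⟩, fun _ ↦ hyS hS⟩
  · obtain ⟨⟨hS, hyS⟩, hxS⟩ := hS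
    exact ⟨⟨mem_compression_of_mem hxu hS (hxS hS), hyS⟩, fun _ ↦ hxS hS⟩

lemma disjoint_union_sdiff_union_sdiff_inter {u' : Finset α} (hST : Disjoint S T) (hu' : u' ⊆ u) :
    Disjoint ((S ∪ v) \ u) ((T ∪ u') \ (v ∩ T)) := by
  rw [disjoint_left] at hST ⊢
  intro i hi hi'
  simp only [mem_sdiff, mem_union, mem_inter, not_and] at hi hi'
  obtain ⟨hiS | hiv, hiu⟩ := hi
  all_goals
    obtain ⟨hiT | hiu', hivT⟩ := hi'
  · exact hST hiS hiT
  · exact hiu (hu' hiu')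
  · exact hivT hiv hiT
  · exact hiu (hu' hiu')

/-- `F` is compressed for all pairs `u`, `v` with `x ∈ u` and `#u = #v < m`. -/
def IsCompressedBelow (F : Finset (Finset α)) (x : α) (m : ℕ) : Prop :=
  ∀ u v : Finset α, x ∈ u → #u = #v → #u < m → UV.IsCompressed u v F

lemma exists_subset_union_sdiff_inter_mem (hxu : x ∈ u) (huv : #u = #v)
    (hmin : IsCompressedBelow F x #u)
    (hTF : T ∈ F) (hT : T ∈ UV.compression u v F) (huT : Disjoint u T) :
    ∃ u' ⊆ u, (T ∪ u') \ (v ∩ T) ∈ F := by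
  obtain hvT | ⟨z, hz⟩ := (v ∩ T).eq_empty_or_nonempty
  · exact ⟨∅, empty_subset u, by simpa [hvT]⟩
  by_cases hv : v ⊆ T
  · refine ⟨u, subset_rfl, ?_⟩
    rw [inter_eq_left.2 hv]
    exact UV.sup_sdiff_mem_of_mem_compression hT hv huT
  have hlt : #(v ∩ T) < #u :=
    huv ▸ card_lt_card ⟨inter_subset_left, fun h ↦ hv (h.trans inter_subset_right)⟩
  obtain ⟨u', hxu', hu', hcard⟩ := exists_subsuperset_card_eq (n := #(v ∩ T))
    (singleton_subset_iff.2 hxu) (card_singleton x ▸ card_pos.2 ⟨z, hz⟩) hlt.le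
  have hcomp := hmin u' (v ∩ T) (singleton_subset_iff.1 hxu') hcard (hcard ▸ hlt)
  exact ⟨u', hu', UV.sup_sdiff_mem_of_mem_compression (hcomp.eq.symm ▸ hTF) inter_subset_right
    (huT.mono_left hu')⟩

/- If a set `S` created by the compression were disjoint from a surviving set `T`, then the
preimage `(S ∪ v) \ u` of `S` would be disjoint from a member of `F` that replaces `v ∩ T` in `T`
by a subset of `u`. -/
lemma intersecting_compression (hF : (F : Set (Finset α)).Intersecting) (hxu : x ∈ u)
    (huv : #u = #v)
    (hmin : IsCompressedBelow F x #u) :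
    (UV.compression u v F : Set (Finset α)).Intersecting := by
  have hnew : ∀ S ∈ UV.compression u v F, S ∉ F → ∀ T ∈ UV.compression u v F, T ∈ F →
      ¬Disjoint S T := by
    intro S hS hSF T hT hTF hST
    have huS : u ⊆ S := UV.le_of_mem_compression_of_notMem hS hSF
    obtain ⟨u', hu', hT'⟩ :=
      exists_subset_union_sdiff_inter_mem hxu huv hmin hTF hT (hST.mono_left huS)
    exact hF (UV.sup_sdiff_mem_of_mem_compression_of_notMem hS hSF) hT'
      (disjoint_union_sdiff_union_sdiff_inter hST hu')
  intro S hS T hT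
  by_cases hSF : S ∈ F <;> by_cases hTF : T ∈ F
  · exact hF hSF hTF
  · exact fun h ↦ hnew T hT hTF S hS hSF h.symm
  · exact hnew S hS hSF T hT hTF
  · exact not_disjoint_iff.2 ⟨x, UV.le_of_mem_compression_of_notMem hS hSF hxu,
      UV.le_of_mem_compression_of_notMem hT hTF hxu⟩

variable [Fintype α] {k : ℕ}

lemma exists_minimal_not_isCompressed (hF : (F : Set (Finset α)).Intersecting)
    (hsized : (F : Set (Finset α)).Sized k) (hα : 2 * k ≤ Fintype.card α)
    (hx : (F.nonMemberSubfamily x).Nonempty) :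
    ∃ u v : Finset α, x ∈ u ∧ #u = #v ∧ ¬UV.IsCompressed u v F ∧ IsCompressedBelow F x #u := by
  classical
  let P : Finset (Finset α × Finset α) :=
    {p | x ∈ p.1 ∧ #p.1 = #p.2 ∧ ¬UV.IsCompressed p.1 p.2 F}
  have hP : P.Nonempty := by
    obtain ⟨S, hS⟩ := hx
    obtain ⟨hS, hxS⟩ := mem_nonMemberSubfamily.1 hS
    have hScard : #S = k := hsized hS
    have hk : 0 < k := hScard ▸ card_pos.2 (nonempty_iff_ne_empty.2 (hF.ne_bot hS))
    obtain ⟨u, hxu, huS, hu⟩ := exists_subsuperset_card_eq (n := k)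
      (singleton_subset_iff.2 (mem_compl.2 hxS)) (by rwa [card_singleton])
      (by rw [card_compl, hScard]; lia)
    have huS : Disjoint u S := disjoint_left.2 fun i hi ↦ mem_compl.1 (huS hi)
    refine ⟨(u, S), mem_filter.2 ⟨mem_univ _, singleton_subset_iff.1 hxu, by rw [hu, hScard],
      fun hcomp ↦ ?_⟩⟩
    have hmem : (S ∪ u) \ S ∈ F :=
      UV.sup_sdiff_mem_of_mem_compression (hcomp.eq.symm ▸ hS) le_rfl huS
    exact hF hmem hS disjoint_sdiff_self_left
  obtain ⟨⟨u, v⟩, huv, hmin⟩ := exists_min_image P (#·.1) hP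
  obtain ⟨-, hxu, hcard, hcomp⟩ := mem_filter.1 huv
  refine ⟨u, v, hxu, hcard, hcomp, fun u' v' hxu' hcard' hlt ↦ by_contra fun hcomp' ↦ ?_⟩
  exact (hmin (u', v') (mem_filter.2 ⟨mem_univ _, hxu', hcard', hcomp'⟩)).not_gt hlt

end Compression

section Centered

variable {α : Type*} [DecidableEq α] {F : Finset (Finset α)} {u v : Finset α} {x : α}
  {k r s L N : ℕ}

/-- `F` is an intersecting family of `k`-sets in which `x` has maximum degree. The degree condition
is expressed by the numbers of sets avoiding a point, so the diversity of `F` is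
`#(F.nonMemberSubfamily x)`. -/
structure IsCenteredAt (F : Finset (Finset α)) (k : ℕ) (x : α) : Prop where
  sized : (F : Set (Finset α)).Sized k
  intersecting : (F : Set (Finset α)).Intersecting
  card_nonMemberSubfamily_le (y : α) : #(F.nonMemberSubfamily x) ≤ #(F.nonMemberSubfamily y)

lemma IsCenteredAt.compression (hF : IsCenteredAt F k x) (hxu : x ∈ u) (huv : #u = #v)
    (hmin : IsCompressedBelow F x #u) :
    IsCenteredAt (UV.compression u v F) k x where
  sized := hF.sized.uvCompression huv
  intersecting := intersecting_compression hF.intersecting hxu huv hmin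
  card_nonMemberSubfamily_le y :=
    card_nonMemberSubfamily_compression_le hxu (hF.card_nonMemberSubfamily_le y)

lemma IsCenteredAt.card_memberSubfamily_le (hF : IsCenteredAt F k x) (y : α) :
    #((F.nonMemberSubfamily x).memberSubfamily y) ≤
      #((F.nonMemberSubfamily y).memberSubfamily x) := by
  have hx := card_memberSubfamily_add_card_nonMemberSubfamily y (F.nonMemberSubfamily x)
  have hy := card_memberSubfamily_add_card_nonMemberSubfamily x (F.nonMemberSubfamily y)
  have hcomm : (F.nonMemberSubfamily x).nonMemberSubfamily y =
      (F.nonMemberSubfamily y).nonMemberSubfamily x := filter_comm _ _ _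
  have := hF.card_nonMemberSubfamily_le y
  rw [hcomm] at hx
  lia

variable [Fintype α]

/- If there were more such sets, then there would be at least as many sets through `x` avoiding
`y`, and these two families are cross-intersecting, which the Lovász form of Kruskal–Katona forbids
at this size. -/
lemma IsCenteredAt.card_memberSubfamily_le_choose (hF : IsCenteredAt F (s + 2) x)
    (hα : Fintype.card α = r + s + 4) (hsr : s ≤ r) (y : α) :
    #((F.nonMemberSubfamily x).memberSubfamily y) ≤ (r + s + 1).choose s := by
  obtain rfl | hxy := eq_or_ne x y
  · simp
  by_contra! hlt
  have hF_univ := hF.sized.subset_powersetCard_univ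
  have h𝒜 := memberSubfamily_subset_powersetCard
    (nonMemberSubfamily_subset_powersetCard hF_univ x) y
  have hℬ := memberSubfamily_subset_powersetCard
    (nonMemberSubfamily_subset_powersetCard hF_univ y) x
  rw [erase_right_comm] at hℬ
  have hW : #((univ.erase x).erase y) = r + s + 2 := by
    rw [card_erase_of_mem (mem_erase.2 ⟨hxy.symm, mem_univ y⟩), card_erase_of_mem (mem_univ x),
      card_univ, hα]
    rfl
  have hsymm : (r + s + 1).choose (r + 1) = (r + s + 1).choose s :=
    Nat.choose_symm_of_eq_add (by lia)
  have hupp := card_add_choose_le_of_cross (r := r + 1) (N := r + s + 1) h𝒜 hℬ (by lia)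
    (fun S hS T hT ↦ not_disjoint_of_mem_nonMemberSubfamily_memberSubfamily hF.intersecting hS hT)
    (by lia) (by lia) (by have := hF.card_memberSubfamily_le y; lia)
  rw [hW, Nat.choose_succ_succ' (r + s + 1)] at hupp
  lia

lemma IsCenteredAt.card_filter_subset_le_choose (hF : IsCenteredAt F (s + 2) x)
    (hα : Fintype.card α = r + s + 4) (hsr : s ≤ r) (hv : v.Nonempty) :
    #{S ∈ F.nonMemberSubfamily x | v ⊆ S} ≤ (r + s + 1).choose s := by
  obtain hcard | hcard := Nat.eq_or_lt_of_le (card_pos.2 hv)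
  · obtain ⟨y, rfl⟩ := card_eq_one.1 hcard.symm
    simp only [singleton_subset_iff, card_filter_mem_eq_card_memberSubfamily]
    exact hF.card_memberSubfamily_le_choose hα hsr y
  · obtain ⟨w, hwv, hw⟩ := exists_subset_card_eq hcard
    have hle := card_filter_subset_le_of_subset_powersetCard
      (nonMemberSubfamily_subset_powersetCard hF.sized.subset_powersetCard_univ x) w
    rw [card_erase_of_mem (mem_univ x), card_univ, hα, hw] at hle
    exact (card_le_card (monotone_filter_right _ fun S _ hS ↦ hwv.trans hS)).trans hle

/- A compression with a minimal uncompressed pair does not overshoot the window, as it moves at most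
`(r + s + 1).choose s` sets. -/
lemma IsCenteredAt.exists_card_nonMemberSubfamily_lt (hF : IsCenteredAt F (s + 2) x)
    (hα : Fintype.card α = r + s + 4) (hsr : s ≤ r)
    (hlarge : (r + s + 1).choose (r + 1) + (r + s).choose r < #(F.nonMemberSubfamily x)) :
    ∃ F' : Finset (Finset α), #F' = #F ∧ IsCenteredAt F' (s + 2) x ∧
      (r + s).choose (r + 1) ≤ #(F'.nonMemberSubfamily x) ∧
      #(F'.nonMemberSubfamily x) < #(F.nonMemberSubfamily x) := by
  obtain ⟨u, v, hxu, huv, hcomp, hmin⟩ := exists_minimal_not_isCompressed hF.intersecting hF.sized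
    (by lia) (card_pos.1 (Nat.zero_lt_of_lt hlarge))
  refine ⟨UV.compression u v F, UV.card_compression u v F, hF.compression hxu huv hmin, ?_,
    card_nonMemberSubfamily_compression_lt hxu hcomp⟩
  have hv : v.Nonempty := card_pos.1 (huv ▸ card_pos.2 ⟨x, hxu⟩)
  have hmoved := hF.card_filter_subset_le_choose hα hsr hv
  have hsplit := card_nonMemberSubfamily_le_card_compression_add u v F x
  have hsymm : (r + s + 1).choose (r + 1) = (r + s + 1).choose s :=
    Nat.choose_symm_of_eq_add (by lia)
  have hchoose : (r + s).choose (r + 1) ≤ (r + s).choose r :=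
    choose_le_choose_of_le_add (by lia) (by lia)
  lia

lemma IsCenteredAt.exists_card_nonMemberSubfamily_mem_Icc (hF : IsCenteredAt F (s + 2) x)
    (hα : Fintype.card α = r + s + 4) (hsr : s ≤ r) (hL : L ≤ (r + s).choose (r + 1))
    (hlow : L ≤ #(F.nonMemberSubfamily x)) :
    ∃ F' : Finset (Finset α), #F' = #F ∧ IsCenteredAt F' (s + 2) x ∧
      #(F'.nonMemberSubfamily x) ∈ Icc L ((r + s + 1).choose (r + 1) + (r + s).choose r) := by
  induction hcard : #(F.nonMemberSubfamily x) using Nat.strong_induction_on generalizing F with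
  | _ d ih =>
    subst hcard
    by_cases hupp : #(F.nonMemberSubfamily x) ≤ (r + s + 1).choose (r + 1) + (r + s).choose r
    · exact ⟨F, rfl, hF, mem_Icc.2 ⟨hlow, hupp⟩⟩
    obtain ⟨F₁, hF₁card, hF₁, hF₁low, hlt⟩ :=
      hF.exists_card_nonMemberSubfamily_lt hα hsr (not_le.1 hupp)
    obtain ⟨F₂, hF₂card, hF₂⟩ := ih _ hlt hF₁ (hL.trans hF₁low) rfl
    exact ⟨F₂, hF₂card.trans hF₁card, hF₂⟩

lemma card_add_choose_le_of_intersecting (hsized : (F : Set (Finset α)).Sized (s + 2))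
    (hF : (F : Set (Finset α)).Intersecting) (hα : Fintype.card α = r + s + 4) (hsr : s ≤ r)
    (hrN : r + 1 ≤ N) (hN : N ≤ r + s + 1) (x : α)
    (hlow : N.choose (r + 1) ≤ #(F.nonMemberSubfamily x))
    (hupp : #(F.nonMemberSubfamily x) ≤ (r + s + 1).choose (r + 1) + (r + s).choose r) :
    #F + N.choose (s + 1) ≤ (r + s + 3).choose (s + 1) + N.choose (r + 1) := by
  have hW : #(univ.erase x) = r + s + 3 := by
    rw [card_erase_of_mem (mem_univ x), card_univ, hα]
    rfl
  have := card_add_card_add_choose_le_of_cross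
    (memberSubfamily_subset_powersetCard hsized.subset_powersetCard_univ x)
    (nonMemberSubfamily_subset_powersetCard hsized.subset_powersetCard_univ x) (by lia)
    (fun S hS T hT ↦ not_disjoint_of_mem_memberSubfamily hF hS hT) hsr hrN hN hlow hupp
  rwa [card_memberSubfamily_add_card_nonMemberSubfamily, hW] at this

end Centered

section Diversity

variable {α : Type*} [Fintype α] [DecidableEq α]

/-- The diversity of `F`: the number of its sets minus the maximum degree of a point. -/
def diversity (F : Finset (Finset α)) : ℕ := #F - univ.sup fun i ↦ #{A ∈ F | i ∈ A}

lemma exists_diversity_eq_card_nonMemberSubfamily [Nonempty α] (F : Finset (Finset α)) :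
    ∃ x, diversity F = #(F.nonMemberSubfamily x) ∧
      ∀ y, #(F.nonMemberSubfamily x) ≤ #(F.nonMemberSubfamily y) := by
  have hsplit (i : α) : #{A ∈ F | i ∈ A} + #(F.nonMemberSubfamily i) = #F :=
    card_filter_add_card_filter_not _
  obtain ⟨x, -, hx⟩ := exists_mem_eq_sup univ univ_nonempty fun i ↦ #{A ∈ F | i ∈ A}
  refine ⟨x, ?_, fun y ↦ ?_⟩
  · rw [diversity, hx]
    have := hsplit x
    lia
  · have hle : #{A ∈ F | y ∈ A} ≤ #{A ∈ F | x ∈ A} :=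
      hx ▸ le_sup (f := fun i ↦ #{A ∈ F | i ∈ A}) (mem_univ y)
    have := hsplit x
    have := hsplit y
    lia

end Diversity

end KupavskiiZakharov

open KupavskiiZakharov Finset in
theorem KZ_diversity_general {α : Type*} [Fintype α] [DecidableEq α] {F : Finset (Finset α)}
    {k u : ℕ} (hk : 2 * k ≤ Fintype.card α) (hu : 3 ≤ u) (huk : u ≤ k)
    (hsized : (F : Set (Finset α)).Sized k) (hF : (F : Set (Finset α)).Intersecting)
    (hdiv : (Fintype.card α - u - 1).choose (Fintype.card α - k - 1) ≤ diversity F) :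
    #F + (Fintype.card α - u - 1).choose (k - 1) ≤ (Fintype.card α - 1).choose (k - 1) +
      (Fintype.card α - u - 1).choose (Fintype.card α - k - 1) := by
  obtain ⟨s, rfl⟩ : ∃ s, k = s + 2 := ⟨k - 2, by lia⟩
  obtain ⟨r, hα⟩ : ∃ r, Fintype.card α = r + s + 4 := ⟨Fintype.card α - s - 4, by lia⟩
  have : Nonempty α := Fintype.card_pos_iff.1 (by lia)
  obtain ⟨x, hx, hmax⟩ := exists_diversity_eq_card_nonMemberSubfamily F
  rw [hα, show r + s + 4 - (s + 2) - 1 = r + 1 by lia] at hdiv ⊢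
  have hcenter : IsCenteredAt F (s + 2) x := ⟨hsized, hF, hmax⟩
  obtain ⟨F', hcard, hF', hwindow⟩ := hcenter.exists_card_nonMemberSubfamily_mem_Icc hα (by lia)
    (Nat.choose_le_choose _ (by lia)) (hx ▸ hdiv)
  obtain ⟨hlow, hupp⟩ := mem_Icc.1 hwindow
  rw [← hcard]
  exact card_add_choose_le_of_intersecting hF'.sized hF'.intersecting hα (by lia) (by lia) (by lia)
    x hlow hupp

/-- Theorem (Kupavskii–Zakharov, Theorem 8, for integer `u`): let `n > 2k > 0` and
let `F` be an intersecting family of `k`-subsets of `[n]`. If the diversity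
satisfies `γ(F) ≥ C(n-u-1, n-k-1)` for some integer `3 ≤ u ≤ k`, then
`|F| ≤ C(n-1, k-1) + C(n-u-1, n-k-1) - C(n-u-1, k-1)`. -/
theorem KZ_diversity (n k u : ℕ) (hk : 0 < k) (hn : 2 * k < n) (hu : 3 ≤ u) (huk : u ≤ k)
    (F : Finset (Finset (Fin n)))
    (hcard : ∀ A ∈ F, A.card = k)
    (hint : ∀ A ∈ F, ∀ B ∈ F, (A ∩ B).Nonempty)
    (hdiv : (n - u - 1).choose (n - k - 1) ≤
      F.card - Finset.univ.sup (fun i : Fin n => (F.filter (fun A => i ∈ A)).card)) :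
    (F.card : ℤ) ≤ ((n - 1).choose (k - 1) : ℤ) + ((n - u - 1).choose (n - k - 1) : ℤ)
      - ((n - u - 1).choose (k - 1) : ℤ) := by
  have := KZ_diversity_general (F := F) (by simpa using hn.le) hu huk (fun A hA ↦ hcard A hA)
    (fun A hA B hB ↦ Finset.not_disjoint_iff_nonempty_inter.2 (hint A hA B hB))
    (by simpa [KupavskiiZakharov.diversity] using hdiv)
  rw [Fintype.card_fin] at this
  lia
end
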